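/- Let φ : ℕ → ℕ₀ be a function with φ(d) ≤ d for all d ∈ ℕ, and suppose that for some c ∈ (0,1] one has φ(d) ∼ c·d as d → ∞ (i.e. φ(d)/d → c). Then for every α ∈ (0,1): liminf_{d→∞} q_L(α,d,φ(d)) · (cd)^{1/(1−α)} ≥ (1−α)/4. -/

import Mathlib

open MeasureTheory Filter ENNReal

/-- Sites of `ℤ^{d+1}`. -/
abbrev Site (d : ℕ) := Fin (d + 1) → ℤ

/-- Site-percolation configurations on `ℤ^{d+1}`: a site is open iff its value is `true`. -/
abbrev Config (d : ℕ) := Site d → Bool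

/-- `P` is the i.i.d. Bernoulli(`p`) product measure on `{0,1}^ι`: it is a probability
measure whose cylinder events have the correct product probabilities. -/
def IsBernoulli {ι : Type*} (p : ℝ) (P : Measure (ι → Bool)) : Prop :=
  IsProbabilityMeasure P ∧
    ∀ (s : Finset ι) (f : ι → Bool),
      P {ω | ∀ x ∈ s, ω x = f x} =
        ∏ x ∈ s, (if f x then ENNReal.ofReal p else ENNReal.ofReal (1 - p))

/-- A function `F : ℤ^d → ℤ` is Lipschitz: `‖x − y‖₁ = 1 → |F x − F y| ≤ 1`. -/
def IsLipschitzFn {d : ℕ} (F : (Fin d → ℤ) → ℤ) : Prop :=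
  ∀ x y : Fin d → ℤ, (∑ i, |x i - y i|) = 1 → |F x - F y| ≤ 1

/-- Height `⌊α ∑ᵢ ηᵢ xᵢ⌋` of the tilted plane `L^{α,d}_η` above `x ∈ ℤ^d`. -/
noncomputable def planeHt (α : ℝ) {d : ℕ} (η x : Fin d → ℤ) : ℤ :=
  ⌊α * ∑ i, (η i : ℝ) * (x i : ℝ)⌋

/-- `η ∈ {-1,0,1}^d`. -/
def IsSign {d : ℕ} (η : Fin d → ℤ) : Prop := ∀ i, η i = -1 ∨ η i = 0 ∨ η i = 1

/-- The event `LIP^{α,d}_η` that there is an open Lipschitz surface lying (strictly) above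
the tilted plane `L^{α,d}_η`. -/
def LIP (α : ℝ) {d : ℕ} (η : Fin d → ℤ) : Set (Config d) :=
  {ω | ∃ F : (Fin d → ℤ) → ℤ, IsLipschitzFn F ∧
    ∀ x : Fin d → ℤ, ω (Fin.snoc x (F x)) = true ∧ planeHt α η x < F x}

/-- `pc` is the critical probability `p_L(α,d,η)` of Lipschitz percolation above the tilted
plane `L^{α,d}_η`: `pc ∈ (0,1)`, for `p` below it there is `P_p`-a.s. no open Lipschitz
surface above the plane, and for `p` above it there `P_p`-a.s. is one.
(Here `P p` is the Bernoulli(`p`) product measure on `{0,1}^{ℤ^{d+1}}`.) -/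
def IsCriticalProb {d : ℕ} (P : ℝ → Measure (Config d)) (α : ℝ) (η : Fin d → ℤ)
    (pc : ℝ) : Prop :=
  pc ∈ Set.Ioo (0 : ℝ) 1 ∧
    (∀ p, 0 ≤ p → p < pc → P p (LIP α η) = 0) ∧
    (∀ p, pc < p → p ≤ 1 → P p (LIP α η) = 1)

/-- The canonical direction vector `η ∈ {-1,0,1}^d` with `k` entries equal to `1`; the
critical probability `p_L(α,d,η)` depends on `η` only through `k = ‖η‖₁`, and
`p_L(α,d,k)` denotes the common value. -/
def etaK (d k : ℕ) : Fin d → ℤ := fun i => if (i : ℕ) < k then 1 else 0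

section Reachability

variable {d : ℕ}

/-- Points reachable in at most `n` moves from the region on or below the tilted plane; a move
goes diagonally down to a neighbouring column, or straight up onto a closed site. -/
def reachIn (α : ℝ) (η : Fin d → ℤ) (ω : Config d) : ℕ → Set ((Fin d → ℤ) × ℤ)
  | 0 => {z | z.2 ≤ planeHt α η z.1}
  | n + 1 => {z | z ∈ reachIn α η ω n ∨
      (∃ i, (z.1 + Pi.single i 1, z.2 + 1) ∈ reachIn α η ω n ∨
        (z.1 - Pi.single i 1, z.2 + 1) ∈ reachIn α η ω n) ∨
      (ω (Fin.snoc z.1 z.2) = false ∧ (z.1, z.2 - 1) ∈ reachIn α η ω n)}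

lemma snoc_pair_injective :
    Function.Injective (fun z : (Fin d → ℤ) × ℤ => (Fin.snoc z.1 z.2 : Site d)) := by
  rintro ⟨x, a⟩ ⟨y, b⟩ h
  have h' : (Fin.snoc x a : Site d) = Fin.snoc y b := h
  have := Fin.snoc_injective2 h'
  simp [this.1, this.2]

/-- The event that all the sites of `T` are closed. -/
def closedOn (T : Finset ((Fin d → ℤ) × ℤ)) : Set (Config d) :=
  {ω | ∀ z ∈ T, ω (Fin.snoc z.1 z.2) = false}

lemma measure_closedOn {p : ℝ} {P : Measure (Config d)} (hP : IsBernoulli p P)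
    (T : Finset ((Fin d → ℤ) × ℤ)) :
    P (closedOn T) = ENNReal.ofReal (1 - p) ^ T.card := by
  classical
  have h := hP.2 (T.image fun z => (Fin.snoc z.1 z.2 : Site d)) (fun _ => false)
  simp only [Finset.mem_image, forall_exists_index, and_imp, forall_apply_eq_imp_iff₂,
    Bool.false_eq_true, if_false, Finset.prod_const,
    Finset.card_image_of_injective _ snoc_pair_injective] at h
  exact h

lemma reachIn_subset_succ (α : ℝ) (η : Fin d → ℤ) (ω : Config d) (n : ℕ) :
    reachIn α η ω n ⊆ reachIn α η ω (n + 1) := fun _ hz => Or.inl hz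

/-- The event that `T` is closed and that `z` becomes reachable, within `n` moves, at a time when
no point of `T` is. -/
def reachAvoiding (α : ℝ) (η : Fin d → ℤ) (n : ℕ) (z : (Fin d → ℤ) × ℤ)
    (T : Finset ((Fin d → ℤ) × ℤ)) : Set (Config d) :=
  {ω | ω ∈ closedOn T ∧ ∃ m ≤ n, z ∈ reachIn α η ω m ∧ ∀ t ∈ T, t ∉ reachIn α η ω m}

lemma reachAvoiding_succ_subset [DecidableEq ((Fin d → ℤ) × ℤ)] {α : ℝ} {η : Fin d → ℤ} {n : ℕ}
    {z : (Fin d → ℤ) × ℤ} {T : Finset ((Fin d → ℤ) × ℤ)} (hz : ¬ z.2 ≤ planeHt α η z.1) :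
    reachAvoiding α η (n + 1) z T ⊆
      (⋃ i, (reachAvoiding α η n (z.1 + Pi.single i 1, z.2 + 1) T ∪
        reachAvoiding α η n (z.1 - Pi.single i 1, z.2 + 1) T)) ∪
      reachAvoiding α η n (z.1, z.2 - 1) (insert z T) := by
  classical
  rintro ω ⟨hT, hex⟩
  obtain ⟨m, ⟨hmn, hzm, hTm⟩, hmin⟩ : ∃ m, (m ≤ n + 1 ∧ z ∈ reachIn α η ω m ∧
      ∀ t ∈ T, t ∉ reachIn α η ω m) ∧ ∀ m' < m, ¬ (m' ≤ n + 1 ∧ z ∈ reachIn α η ω m' ∧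
      ∀ t ∈ T, t ∉ reachIn α η ω m') :=
    ⟨Nat.find hex, Nat.find_spec hex, fun m' h => Nat.find_min hex h⟩
  obtain _ | m := m
  · exact absurd hzm hz
  have hTm' : ∀ t ∈ T, t ∉ reachIn α η ω m := fun t ht h =>
    hTm t ht (reachIn_subset_succ _ _ _ _ h)
  have hznm : z ∉ reachIn α η ω m := fun h => hmin m (Nat.lt_succ_self m) ⟨by omega, h, hTm'⟩
  rcases hzm with h | ⟨i, h | h⟩ | ⟨hc, h⟩
  · exact absurd h hznm
  · exact Or.inl (Set.mem_iUnion.2 ⟨i, Or.inl ⟨hT, m, by omega, h, hTm'⟩⟩)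
  · exact Or.inl (Set.mem_iUnion.2 ⟨i, Or.inr ⟨hT, m, by omega, h, hTm'⟩⟩)
  · refine Or.inr ⟨?_, m, by omega, h, ?_⟩
    · intro t ht
      rcases Finset.mem_insert.1 ht with rfl | ht
      exacts [hc, hT t ht]
    · intro t ht
      rcases Finset.mem_insert.1 ht with rfl | ht
      exacts [hznm, hTm' t ht]

/-- A superharmonic weight that is at least one below the plane dominates the probability of
being reachable. -/
lemma measure_reachAvoiding_le {p : ℝ} {P : Measure (Config d)} (hP : IsBernoulli p P)
    {α : ℝ} {η : Fin d → ℤ} (g : (Fin d → ℤ) × ℤ → ℝ≥0∞)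
    (hg1 : ∀ z, z.2 ≤ planeHt α η z.1 → 1 ≤ g z)
    (hg : ∀ z, (∑ i, (g (z.1 + Pi.single i 1, z.2 + 1) + g (z.1 - Pi.single i 1, z.2 + 1))) +
      ENNReal.ofReal (1 - p) * g (z.1, z.2 - 1) ≤ g z)
    (n : ℕ) (z : (Fin d → ℤ) × ℤ) (T : Finset ((Fin d → ℤ) × ℤ)) :
    P (reachAvoiding α η n z T) ≤ ENNReal.ofReal (1 - p) ^ T.card * g z := by
  classical
  induction n generalizing z T with
  | zero =>
    by_cases hz : z.2 ≤ planeHt α η z.1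
    · calc P (reachAvoiding α η 0 z T) ≤ P (closedOn T) := measure_mono fun ω h => h.1
        _ = ENNReal.ofReal (1 - p) ^ T.card * 1 := by rw [measure_closedOn hP, mul_one]
        _ ≤ _ := by gcongr; exact hg1 z hz
    · have : reachAvoiding α η 0 z T = ∅ := by
        ext ω
        simp only [reachAvoiding, Set.mem_ofPred_eq, Set.mem_empty_iff_false, iff_false]
        rintro ⟨_, m, hm, h, _⟩
        obtain rfl : m = 0 := by omega
        exact hz h
      simp [this]
  | succ n ih =>
    by_cases hz : z.2 ≤ planeHt α η z.1
    · calc P (reachAvoiding α η (n + 1) z T) ≤ P (closedOn T) := measure_mono fun ω h => h.1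
        _ = ENNReal.ofReal (1 - p) ^ T.card * 1 := by rw [measure_closedOn hP, mul_one]
        _ ≤ _ := by gcongr; exact hg1 z hz
    by_cases hzT : z ∈ T
    · have : reachAvoiding α η (n + 1) z T = ∅ := by
        ext ω
        simp only [reachAvoiding, Set.mem_ofPred_eq, Set.mem_empty_iff_false, iff_false]
        rintro ⟨_, m, hm, h, h'⟩
        exact h' z hzT h
      simp [this]
    calc P (reachAvoiding α η (n + 1) z T)
        ≤ (∑ i, (P (reachAvoiding α η n (z.1 + Pi.single i 1, z.2 + 1) T) +
            P (reachAvoiding α η n (z.1 - Pi.single i 1, z.2 + 1) T))) +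
          P (reachAvoiding α η n (z.1, z.2 - 1) (insert z T)) := by
          refine (measure_mono (reachAvoiding_succ_subset hz)).trans ?_
          refine (measure_union_le _ _).trans ?_
          gcongr
          refine (measure_iUnion_fintype_le _ _).trans ?_
          gcongr
          exact measure_union_le _ _
      _ ≤ (∑ i, (ENNReal.ofReal (1 - p) ^ T.card * g (z.1 + Pi.single i 1, z.2 + 1) +
            ENNReal.ofReal (1 - p) ^ T.card * g (z.1 - Pi.single i 1, z.2 + 1))) +
          ENNReal.ofReal (1 - p) ^ (insert z T).card * g (z.1, z.2 - 1) := by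
          gcongr
          all_goals apply ih
      _ = ENNReal.ofReal (1 - p) ^ T.card *
          ((∑ i, (g (z.1 + Pi.single i 1, z.2 + 1) + g (z.1 - Pi.single i 1, z.2 + 1))) +
            ENNReal.ofReal (1 - p) * g (z.1, z.2 - 1)) := by
          rw [Finset.card_insert_of_notMem hzT, mul_add, Finset.mul_sum, pow_succ, mul_assoc]
          simp only [mul_add]
      _ ≤ _ := by gcongr; exact hg z

lemma measure_reachable_le {p : ℝ} {P : Measure (Config d)} (hP : IsBernoulli p P)
    {α : ℝ} {η : Fin d → ℤ} (g : (Fin d → ℤ) × ℤ → ℝ≥0∞)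
    (hg1 : ∀ z, z.2 ≤ planeHt α η z.1 → 1 ≤ g z)
    (hg : ∀ z, (∑ i, (g (z.1 + Pi.single i 1, z.2 + 1) + g (z.1 - Pi.single i 1, z.2 + 1))) +
      ENNReal.ofReal (1 - p) * g (z.1, z.2 - 1) ≤ g z)
    (z : (Fin d → ℤ) × ℤ) :
    P {ω | ∃ n, z ∈ reachIn α η ω n} ≤ g z := by
  have hU : {ω | ∃ n, z ∈ reachIn α η ω n} = ⋃ n, reachAvoiding α η n z ∅ := by
    ext ω
    simp only [reachAvoiding, closedOn, Set.mem_ofPred_eq, Set.mem_iUnion]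
    constructor
    · rintro ⟨n, h⟩
      exact ⟨n, by simp, n, le_rfl, h, by simp⟩
    · rintro ⟨_, _, m, _, h, _⟩
      exact ⟨m, h⟩
  have hmono : Monotone fun n => reachAvoiding α η n z ∅ := by
    rintro a b hab ω ⟨h, m, hm, h'⟩
    exact ⟨h, m, hm.trans hab, h'⟩
  rw [hU, hmono.measure_iUnion]
  refine iSup_le fun n => ?_
  simpa using measure_reachAvoiding_le hP g hg1 hg n z ∅

/-- If the reachable heights are bounded above in every column, the lowest surface above them is
an open Lipschitz surface. -/
lemma mem_LIP_of_bounded {α : ℝ} {η : Fin d → ℤ} {ω : Config d}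
    (hb : ∀ x, ∃ H : ℤ, ∀ h, (∃ n, (x, h) ∈ reachIn α η ω n) → h ≤ H) : ω ∈ LIP α η := by
  have key : ∀ x, ∃ f : ℤ, (∃ n, (x, f) ∈ reachIn α η ω n) ∧
      ∀ h, (∃ n, (x, h) ∈ reachIn α η ω n) → h ≤ f := by
    intro x
    obtain ⟨H, hH⟩ := hb x
    exact Int.exists_greatest_of_bdd ⟨H, hH⟩ ⟨planeHt α η x, 0, le_refl (planeHt α η x)⟩
  choose f hf hmax using key
  have hadj : ∀ x y i, (x = y + Pi.single i 1 ∨ x = y - Pi.single i 1) → f x - 1 ≤ f y := by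
    rintro x y i h
    obtain ⟨n, hn⟩ := hf x
    refine hmax y _ ⟨n + 1, Or.inr (Or.inl ⟨i, ?_⟩)⟩
    rcases h with h | h
    · left; simpa [← h] using hn
    · right; simpa [← h] using hn
  refine ⟨fun x => f x + 1, ?_, fun x => ⟨?_, ?_⟩⟩
  · intro x y hxy
    obtain ⟨i, hi⟩ : ∃ i, x i - y i ≠ 0 := by
      by_contra! h
      simp [h] at hxy
    have hsplit := Finset.add_sum_erase Finset.univ (fun i => |x i - y i|) (Finset.mem_univ i)
    have hpos : 0 < |x i - y i| := abs_pos.2 hi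
    have hnn : ∀ j ∈ Finset.univ.erase i, 0 ≤ |x j - y j| := fun j _ => abs_nonneg _
    have hrest := Finset.sum_nonneg hnn
    have h1 : |x i - y i| = 1 := by omega
    have h0 : ∑ j ∈ Finset.univ.erase i, |x j - y j| = 0 := by omega
    have h0' : ∀ j, j ≠ i → x j = y j := by
      intro j hj
      have := (Finset.sum_eq_zero_iff_of_nonneg hnn).1 h0 j (by simp [hj])
      exact sub_eq_zero.1 (abs_eq_zero.1 this)
    have hcase : x = y + Pi.single i 1 ∨ x = y - Pi.single i 1 := by
      rcases (abs_eq zero_le_one).1 h1 with h | h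
      · left; ext j
        by_cases hj : j = i
        · subst hj; simp; omega
        · simp [hj, h0' j hj]
      · right; ext j
        by_cases hj : j = i
        · subst hj; simp; omega
        · simp [hj, h0' j hj]
    have hcase' : y = x + Pi.single i 1 ∨ y = x - Pi.single i 1 := by
      rcases hcase with h | h
      · right; simp [h]
      · left; simp [h]
    have := hadj x y i hcase
    have := hadj y x i hcase'
    show |f x + 1 - (f y + 1)| ≤ 1
    rw [abs_le]
    constructor <;> omega
  · by_contra hc
    have hc' : ω (Fin.snoc x (f x + 1)) = false := by simpa using hc
    obtain ⟨n, hn⟩ := hf x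
    have := hmax x (f x + 1) ⟨n + 1, Or.inr (Or.inr ⟨hc', by simpa using hn⟩)⟩
    omega
  · have := hmax x (planeHt α η x) ⟨0, le_refl (planeHt α η x)⟩
    exact Int.lt_add_one_of_le this

lemma sum_add_single_mul (η x : Fin d → ℤ) (i : Fin d) (ε : ℤ) :
    ∑ j, (η j : ℝ) * ((x + Pi.single i ε : Fin d → ℤ) j : ℝ) =
      (∑ j, (η j : ℝ) * (x j : ℝ)) + η i * ε := by
  simp only [Pi.add_apply, Int.cast_add, mul_add, Finset.sum_add_distrib]
  congr 1
  rw [Finset.sum_eq_single i]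
  · simp
  · intro j _ hj; simp [hj]
  · simp

/-- Exponential weight in the height above the tilted plane. -/
noncomputable def tiltWeight (α θ : ℝ) (η : Fin d → ℤ) (z : (Fin d → ℤ) × ℤ) : ℝ :=
  θ ^ (α * (∑ i, (η i : ℝ) * (z.1 i : ℝ)) - z.2)

lemma sum_etaK_le (d k : ℕ) : (∑ i, (etaK d k i : ℝ)) ≤ k := by
  have h : ∑ i : Fin d, (etaK d k i : ℝ) = ∑ i ∈ Finset.range d, if i < k then (1 : ℝ) else 0 := by
    rw [Finset.sum_range]
    refine Finset.sum_congr rfl fun i _ => ?_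
    simp [etaK]
  rw [h, ← Finset.sum_filter, Finset.sum_const, nsmul_eq_mul, mul_one, Nat.cast_le]
  calc _ ≤ (Finset.range k).card := Finset.card_le_card fun i => by simp
    _ = k := by simp

lemma tiltWeight_superharmonic {α θ p : ℝ} {k : ℕ} (hα : 0 ≤ α) (hθ : 1 < θ)
    (h : (1 - p) * θ + k * θ ^ (α - 1) + 2 * d * θ⁻¹ ≤ 1) (z : (Fin d → ℤ) × ℤ) :
    (∑ i, (tiltWeight α θ (etaK d k) (z.1 + Pi.single i 1, z.2 + 1) +
        tiltWeight α θ (etaK d k) (z.1 - Pi.single i 1, z.2 + 1))) +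
      (1 - p) * tiltWeight α θ (etaK d k) (z.1, z.2 - 1) ≤ tiltWeight α θ (etaK d k) z := by
  have hθ0 : 0 < θ := by linarith
  set w := tiltWeight α θ (etaK d k) z with hw
  have hw0 : 0 < w := Real.rpow_pos_of_pos hθ0 _
  have h1 : ∀ i, tiltWeight α θ (etaK d k) (z.1 + Pi.single i 1, z.2 + 1) =
      w * θ ^ (α * etaK d k i - 1) := by
    intro i
    rw [hw, tiltWeight, tiltWeight, ← Real.rpow_add hθ0, sum_add_single_mul]
    congr 1; push_cast; ring
  have h2 : ∀ i, tiltWeight α θ (etaK d k) (z.1 - Pi.single i 1, z.2 + 1) =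
      w * θ ^ (-(α * etaK d k i) - 1) := by
    intro i
    rw [hw, tiltWeight, tiltWeight, ← Real.rpow_add hθ0, sub_eq_add_neg z.1, ← Pi.single_neg,
      sum_add_single_mul]
    congr 1; push_cast; ring
  have h3 : tiltWeight α θ (etaK d k) (z.1, z.2 - 1) = w * θ := by
    nth_rewrite 2 [← Real.rpow_one θ]
    rw [hw, tiltWeight, tiltWeight, ← Real.rpow_add hθ0]
    congr 1; push_cast; ring
  have h4 : ∀ i, θ ^ (α * etaK d k i - 1) + θ ^ (-(α * etaK d k i) - 1) ≤
      etaK d k i * θ ^ (α - 1) + 2 * θ⁻¹ := by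
    intro i
    have hle : θ ^ (-α - 1) ≤ θ⁻¹ := by
      rw [← Real.rpow_neg_one]
      exact Real.rpow_le_rpow_of_exponent_le hθ.le (by linarith)
    have hinv : 0 < θ⁻¹ := by positivity
    have hneg : θ ^ (-1 : ℝ) = θ⁻¹ := Real.rpow_neg_one θ
    unfold etaK
    split_ifs
    · simp only [Int.cast_one, mul_one, one_mul]; linarith
    · simp only [Int.cast_zero, mul_zero, zero_sub, neg_zero, zero_mul, zero_add, hneg]; linarith
  have h5 : ∑ i, (θ ^ (α * etaK d k i - 1) + θ ^ (-(α * etaK d k i) - 1)) ≤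
      k * θ ^ (α - 1) + 2 * d * θ⁻¹ := by
    refine (Finset.sum_le_sum fun i _ => h4 i).trans ?_
    rw [Finset.sum_add_distrib, ← Finset.sum_mul]
    have := mul_le_mul_of_nonneg_right (sum_etaK_le d k) (Real.rpow_pos_of_pos hθ0 (α - 1)).le
    simp only [Finset.sum_const, Finset.card_univ, Fintype.card_fin, nsmul_eq_mul]
    linarith
  simp only [h1, h2, h3, ← mul_add, ← Finset.mul_sum]
  nlinarith

/-- Below the first-moment threshold there is almost surely an open Lipschitz surface. -/
theorem measure_LIP_eq_one {α θ p : ℝ} {k : ℕ} (hα : 0 ≤ α) (hθ : 1 < θ) (hp : p ≤ 1)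
    {P : Measure (Config d)} (hP : IsBernoulli p P)
    (h : (1 - p) * θ + k * θ ^ (α - 1) + 2 * d * θ⁻¹ ≤ 1) :
    P (LIP α (etaK d k)) = 1 := by
  have := hP.1
  have hθ0 : 0 < θ := by linarith
  have hpos : ∀ z, 0 ≤ tiltWeight α θ (etaK d k) z := fun z => (Real.rpow_pos_of_pos hθ0 _).le
  have hreach : ∀ z, P {ω | ∃ n, z ∈ reachIn α (etaK d k) ω n} ≤
      ENNReal.ofReal (tiltWeight α θ (etaK d k) z) := by
    refine measure_reachable_le hP (fun z => ENNReal.ofReal (tiltWeight α θ (etaK d k) z)) ?_ ?_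
    · intro z hz
      rw [ENNReal.one_le_ofReal]
      refine Real.one_le_rpow hθ.le ?_
      have := Int.le_floor.1 hz
      linarith
    · intro z
      have := tiltWeight_superharmonic hα hθ h z
      have hq : 0 ≤ 1 - p := by linarith
      rw [← ENNReal.ofReal_mul hq]
      simp only [← ENNReal.ofReal_add (hpos _) (hpos _)]
      rw [← ENNReal.ofReal_sum_of_nonneg fun i _ => add_nonneg (hpos _) (hpos _),
        ← ENNReal.ofReal_add (Finset.sum_nonneg fun i _ => add_nonneg (hpos _) (hpos _))
          (mul_nonneg hq (hpos _))]
      exact ENNReal.ofReal_le_ofReal this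
  have hcol : ∀ x : Fin d → ℤ, ∀ᵐ ω ∂P,
      ∃ H : ℤ, ∀ h, (∃ n, (x, h) ∈ reachIn α (etaK d k) ω n) → h ≤ H := by
    intro x
    have hsum : ∑' m : ℕ, P {ω | ∃ n, (x, (m : ℤ)) ∈ reachIn α (etaK d k) ω n} ≠ ⊤ := by
      have hsm : Summable fun m : ℕ => tiltWeight α θ (etaK d k) (x, (m : ℤ)) := by
        have : ∀ m : ℕ, tiltWeight α θ (etaK d k) (x, (m : ℤ)) =
            θ ^ (α * (∑ i, (etaK d k i : ℝ) * (x i : ℝ))) * (θ⁻¹) ^ m := by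
          intro m
          simp only [tiltWeight]
          rw [Real.rpow_sub hθ0, div_eq_mul_inv, inv_pow]
          congr 2
          exact_mod_cast Real.rpow_natCast θ m
        simp only [this]
        exact (summable_geometric_of_lt_one (by positivity) (inv_lt_one_of_one_lt₀ hθ)).mul_left _
      refine ne_top_of_le_ne_top ?_ (ENNReal.tsum_le_tsum fun m => hreach (x, (m : ℤ)))
      rw [← ENNReal.ofReal_tsum_of_nonneg (fun m => hpos _) hsm]
      exact ENNReal.ofReal_ne_top
    filter_upwards [ae_eventually_notMem hsum] with ω hω
    obtain ⟨H, hH⟩ := eventually_atTop.1 hω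
    refine ⟨H, fun h hh => ?_⟩
    by_contra! hlt
    refine hH h.toNat (by omega) ?_
    rw [Int.toNat_of_nonneg (by omega)]
    exact hh
  have hae : ∀ᵐ ω ∂P, ω ∈ LIP α (etaK d k) := by
    filter_upwards [ae_all_iff.2 hcol] with ω hω
    exact mem_LIP_of_bounded hω
  have hcompl : P (LIP α (etaK d k))ᶜ = 0 := hae
  refine le_antisymm prob_le_one ?_
  calc (1 : ℝ≥0∞) = P (LIP α (etaK d k) ∪ (LIP α (etaK d k))ᶜ) := by
        rw [Set.union_compl_self, measure_univ]
    _ ≤ _ := (measure_union_le _ _).trans (by rw [hcompl, add_zero])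

end Reachability

section Collision

variable {k : ℕ}

/-- Averaging over the positive unit steps. -/
noncomputable def avgUp (k : ℕ) : Module.End ℝ ((Fin k → ℤ) → ℝ) :=
  (k : ℝ)⁻¹ • ∑ a : Fin k, LinearMap.funLeft ℝ ℝ fun x => x + Pi.single a 1

/-- Averaging over the negative unit steps. -/
noncomputable def avgDown (k : ℕ) : Module.End ℝ ((Fin k → ℤ) → ℝ) :=
  (k : ℝ)⁻¹ • ∑ a : Fin k, LinearMap.funLeft ℝ ℝ fun x => x - Pi.single a 1

lemma avgUp_apply (f : (Fin k → ℤ) → ℝ) (x : Fin k → ℤ) :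
    avgUp k f x = (k : ℝ)⁻¹ * ∑ a, f (x + Pi.single a 1) := by
  simp [avgUp, LinearMap.funLeft_apply]

lemma avgDown_apply (f : (Fin k → ℤ) → ℝ) (x : Fin k → ℤ) :
    avgDown k f x = (k : ℝ)⁻¹ * ∑ a, f (x - Pi.single a 1) := by
  simp [avgDown, LinearMap.funLeft_apply]

lemma commute_avgUp_avgDown : Commute (avgUp k) (avgDown k) := by
  refine LinearMap.ext fun f => funext fun x => ?_
  simp only [Module.End.mul_apply, avgUp_apply, avgDown_apply, ← Finset.mul_sum]
  rw [Finset.sum_comm]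
  simp only [add_sub_right_comm]

/-- The transition operator of the difference of two independent directed walks. -/
noncomputable def avgDiff (k : ℕ) : Module.End ℝ ((Fin k → ℤ) → ℝ) := avgUp k * avgDown k

lemma avgDiff_apply (f : (Fin k → ℤ) → ℝ) (x : Fin k → ℤ) :
    avgDiff k f x = (k : ℝ)⁻¹ ^ 2 * ∑ a, ∑ b, f (x + Pi.single a 1 - Pi.single b 1) := by
  simp only [avgDiff, Module.End.mul_apply, avgUp_apply, avgDown_apply, ← Finset.mul_sum]
  ring

lemma avgDiff_mono {f g : (Fin k → ℤ) → ℝ} (h : ∀ x, f x ≤ g x) (x : Fin k → ℤ) :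
    avgDiff k f x ≤ avgDiff k g x := by
  simp only [avgDiff_apply]
  gcongr
  exact h _

lemma avgDiff_const (hk : 0 < k) (c : ℝ) : avgDiff k (fun _ => c) = fun _ => c := by
  ext x
  have : (k : ℝ) ≠ 0 := by positivity
  simp only [avgDiff_apply, Finset.sum_const, Finset.card_univ, Fintype.card_fin, nsmul_eq_mul]
  field_simp

/-- The indicator of the origin. -/
noncomputable def originInd (k : ℕ) : (Fin k → ℤ) → ℝ := Pi.single 0 1

/-- The distribution after `n` steps of a uniform directed walk. -/
noncomputable def walkProb (k n : ℕ) : (Fin k → ℤ) → ℝ := (avgDown k ^ n) (originInd k)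

/-- The probability that two independent directed walks, started at a given difference, coincide
after `n` steps. -/
noncomputable def collideProb (k n : ℕ) : (Fin k → ℤ) → ℝ := (avgDiff k ^ n) (originInd k)

lemma walkProb_succ (n : ℕ) (w : Fin k → ℤ) :
    walkProb k (n + 1) w = (k : ℝ)⁻¹ * ∑ a, walkProb k n (w - Pi.single a 1) := by
  rw [walkProb, pow_succ', Module.End.mul_apply, avgDown_apply]
  rfl

lemma collideProb_succ (n : ℕ) : collideProb k (n + 1) = avgDiff k (collideProb k n) := by
  rw [collideProb, pow_succ', Module.End.mul_apply]
  rfl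

lemma originInd_nonneg (x : Fin k → ℤ) : 0 ≤ originInd k x := by
  unfold originInd
  by_cases h : x = 0
  · simp [h]
  · simp [h]

lemma walkProb_nonneg (n : ℕ) (w : Fin k → ℤ) : 0 ≤ walkProb k n w := by
  induction n generalizing w with
  | zero => exact originInd_nonneg w
  | succ n ih =>
    rw [walkProb_succ]
    exact mul_nonneg (by positivity) (Finset.sum_nonneg fun a _ => ih _)

lemma collideProb_nonneg (n : ℕ) (w : Fin k → ℤ) : 0 ≤ collideProb k n w := by
  induction n generalizing w with
  | zero => exact originInd_nonneg w
  | succ n ih =>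
    rw [collideProb_succ, avgDiff_apply]
    exact mul_nonneg (by positivity)
      (Finset.sum_nonneg fun a _ => Finset.sum_nonneg fun b _ => ih _)

lemma sum_eq_of_walkProb_ne_zero {n : ℕ} {w : Fin k → ℤ} (h : walkProb k n w ≠ 0) :
    ∑ a, w a = n := by
  induction n generalizing w with
  | zero =>
    by_contra h0
    refine h ?_
    have : w ≠ 0 := by rintro rfl; simp at h0
    simp [walkProb, originInd, this]
  | succ n ih =>
    rw [walkProb_succ] at h
    obtain ⟨a, -, ha⟩ := Finset.exists_ne_zero_of_sum_ne_zero (right_ne_zero_of_mul h)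
    have := ih ha
    simp only [Pi.sub_apply, Finset.sum_sub_distrib, Finset.sum_pi_single', Finset.mem_univ,
      if_true] at this
    push_cast
    linarith

lemma mul_walkProb_succ (n : ℕ) (w : Fin k → ℤ) (a : Fin k) :
    (w a : ℝ) * walkProb k (n + 1) w = (n + 1) * (k : ℝ)⁻¹ * walkProb k n (w - Pi.single a 1) := by
  induction n generalizing w with
  | zero =>
    rw [walkProb_succ, mul_left_comm, Finset.mul_sum, Finset.sum_eq_single a]
    · by_cases h : w - Pi.single a 1 = 0
      · have : w a = 1 := by have := congrFun h a; simp at this; omega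
        simp [this]
      · simp [walkProb, originInd, h]
    · intro b _ hb
      by_cases h : w - Pi.single b 1 = 0
      · have : w a = 0 := by have := congrFun h a; simpa [hb.symm] using this
        simp [this]
      · simp [walkProb, originInd, h]
    · simp
  | succ n ih =>
    have hstep : ∀ b, (w a : ℝ) * walkProb k (n + 1) (w - Pi.single b 1) =
        (n + 1) * (k : ℝ)⁻¹ * walkProb k n (w - Pi.single a 1 - Pi.single b 1) +
          if a = b then walkProb k (n + 1) (w - Pi.single a 1) else 0 := by
      intro b
      have := ih (w - Pi.single b 1)
      rw [sub_right_comm] at this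
      rw [← this]
      by_cases hab : a = b
      · subst hab; simp; ring
      · simp [hab]
    rw [walkProb_succ, mul_left_comm, Finset.mul_sum, Finset.sum_congr rfl fun b _ => hstep b,
      Finset.sum_add_distrib, ← Finset.mul_sum, Finset.sum_ite_eq, if_pos (Finset.mem_univ a),
      mul_assoc ((n : ℝ) + 1), ← walkProb_succ]
    push_cast
    ring

/-- The probability of the mode of the multinomial distribution with `n` trials and `k` equally
likely outcomes. -/
noncomputable def modeProb (k n : ℕ) : ℝ :=
  ∏ i ∈ Finset.range n, ((i : ℝ) + 1) / (k * ((i / k : ℕ) + 1))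

lemma modeProb_succ (n : ℕ) :
    modeProb k (n + 1) = modeProb k n * (((n : ℝ) + 1) / (k * ((n / k : ℕ) + 1))) :=
  Finset.prod_range_succ _ _

lemma modeProb_nonneg (k n : ℕ) : 0 ≤ modeProb k n :=
  Finset.prod_nonneg fun i _ => by positivity

lemma walkProb_le_modeProb (hk : 0 < k) (n : ℕ) (w : Fin k → ℤ) :
    walkProb k n w ≤ modeProb k n := by
  induction n generalizing w with
  | zero =>
    simp only [walkProb, modeProb, originInd, pow_zero, Module.End.one_apply, Finset.range_zero,
      Finset.prod_empty]
    by_cases h : w = 0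
    · simp [h]
    · simp [h]
  | succ n ih =>
    by_cases h0 : walkProb k (n + 1) w = 0
    · rw [h0]; exact modeProb_nonneg _ _
    have hsum := sum_eq_of_walkProb_ne_zero h0
    obtain ⟨a, ha⟩ : ∃ a, ((n / k : ℕ) : ℤ) + 1 ≤ w a := by
      by_contra! hlt
      have h1 : ∑ a, w a ≤ ∑ _a : Fin k, ((n / k : ℕ) : ℤ) :=
        Finset.sum_le_sum fun a _ => by have := hlt a; omega
      have h2 : k * (n / k) ≤ n := Nat.mul_div_le n k
      simp only [Finset.sum_const, Finset.card_univ, Fintype.card_fin, nsmul_eq_mul] at h1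
      rw [hsum] at h1
      have h3 : n + 1 ≤ k * (n / k) := by exact_mod_cast h1
      omega
    have ha' : ((n / k : ℕ) : ℝ) + 1 ≤ w a := by
      generalize n / k = m at ha ⊢
      exact_mod_cast ha
    have hk' : (0 : ℝ) < k := by positivity
    have hpos : (0 : ℝ) < ((n / k : ℕ) : ℝ) + 1 := by positivity
    have hid := mul_walkProb_succ n w a
    rw [modeProb_succ, mul_div_assoc', le_div_iff₀ (by positivity)]
    calc walkProb k (n + 1) w * (k * (((n / k : ℕ) : ℝ) + 1))
        ≤ walkProb k (n + 1) w * (k * w a) := by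
          gcongr
          exact walkProb_nonneg _ _
      _ = k * (w a * walkProb k (n + 1) w) := by ring
      _ = (n + 1) * walkProb k n (w - Pi.single a 1) := by
          rw [hid]; field_simp
      _ ≤ (n + 1) * modeProb k n := by gcongr; exact ih _
      _ = _ := by ring

lemma collideProb_le_modeProb (hk : 0 < k) (n : ℕ) (x : Fin k → ℤ) :
    collideProb k n x ≤ modeProb k n := by
  rw [collideProb, avgDiff, commute_avgUp_avgDown.mul_pow, Module.End.mul_apply]
  have hpow : ∀ (m : ℕ) (f : (Fin k → ℤ) → ℝ), (∀ y, f y ≤ modeProb k n) →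
      ∀ y, (avgUp k ^ m) f y ≤ modeProb k n := by
    intro m f hf
    induction m with
    | zero => simpa using hf
    | succ m ih =>
      intro y
      have hk' : (k : ℝ) ≠ 0 := by positivity
      rw [pow_succ', Module.End.mul_apply, avgUp_apply]
      calc _ ≤ (k : ℝ)⁻¹ * ∑ _a : Fin k, modeProb k n := by gcongr; exact ih _
        _ = _ := by simp [hk']
  exact hpow n _ (walkProb_le_modeProb hk n) x

lemma modeProb_antitone (hk : 0 < k) : Antitone (modeProb k) := by
  refine antitone_nat_of_succ_le fun n => ?_
  rw [modeProb_succ]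
  refine mul_le_of_le_one_right (modeProb_nonneg _ _) ?_
  rw [div_le_one (by positivity)]
  have := Nat.lt_mul_div_succ n hk
  exact_mod_cast this

lemma modeProb_mul_pow_le (hk : 0 < k) (n : ℕ) : modeProb k n * (k : ℝ) ^ n ≤ n.factorial := by
  induction n with
  | zero => simp [modeProb]
  | succ n ih =>
    have hk' : (0 : ℝ) < k := by positivity
    have h1 : ((n : ℝ) + 1) / (k * ((n / k : ℕ) + 1)) * k ≤ n + 1 := by
      rw [div_mul_eq_mul_div, div_le_iff₀ (by positivity)]
      have : (0 : ℝ) ≤ (n / k : ℕ) := by positivity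
      have h2 : (0 : ℝ) ≤ (n + 1) * (k * (n / k : ℕ)) := by positivity
      nlinarith
    rw [modeProb_succ, pow_succ, Nat.factorial_succ]
    push_cast
    calc _ = (modeProb k n * (k : ℝ) ^ n) * (((n : ℝ) + 1) / (k * ((n / k : ℕ) + 1)) * k) := by ring
      _ ≤ n.factorial * (n + 1) := by
        gcongr
      _ = _ := by ring

lemma modeProb_block_le (hk : 8 ≤ k) (R : ℕ) :
    modeProb k (k * (R + 1)) ≤ modeProb k (k * R) * ((R + 1) / (R + 3)) := by
  have hk0 : 0 < k := by omega
  have hkR : (8 : ℝ) ≤ k := by exact_mod_cast hk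
  have hfac : ∀ t < 4, (((k * R + t : ℕ) : ℝ) + 1) / (k * (((k * R + t) / k : ℕ) + 1)) ≤
      1 - 1 / (2 * (R + 1)) := by
    intro t ht
    have hdiv : (k * R + t) / k = R := by
      rw [Nat.mul_add_div hk0, Nat.div_eq_of_lt (by omega), add_zero]
    rw [hdiv, div_le_iff₀ (by positivity)]
    have ht' : (t : ℝ) + 1 ≤ 4 := by exact_mod_cast ht
    push_cast
    have : (1 - 1 / (2 * ((R : ℝ) + 1))) * (k * (R + 1)) = k * R + k / 2 := by
      field_simp; ring
    rw [this]
    linarith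
  have hy : (0 : ℝ) < 1 / (2 * (R + 1)) := by positivity
  have hy1 : 1 / (2 * ((R : ℝ) + 1)) ≤ 1 := by
    rw [div_le_one (by positivity)]
    have : (0 : ℝ) ≤ R := by positivity
    linarith
  have hm := modeProb_nonneg k (k * R)
  have hstep : modeProb k (k * R + 4) ≤ modeProb k (k * R) * (1 - 1 / (2 * (R + 1))) ^ 4 := by
    have h : modeProb k (k * R + 4) = modeProb k (k * R) * ∏ t ∈ Finset.range 4,
        (((k * R + t : ℕ) : ℝ) + 1) / (k * (((k * R + t) / k : ℕ) + 1)) :=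
      Finset.prod_range_add _ _ _
    rw [h]
    gcongr
    calc _ ≤ ∏ _t ∈ Finset.range 4, (1 - 1 / (2 * ((R : ℝ) + 1))) :=
          Finset.prod_le_prod (fun t _ => by positivity)
            fun t ht => hfac t (Finset.mem_range.1 ht)
      _ = _ := by simp
  calc modeProb k (k * (R + 1)) ≤ modeProb k (k * R + 4) :=
        modeProb_antitone hk0 (by rw [mul_add]; omega)
    _ ≤ _ := hstep
    _ ≤ _ := by
      gcongr
      have hbern := one_add_mul_le_pow (show (-2 : ℝ) ≤ 1 / (2 * (R + 1)) by linarith) 4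
      set y : ℝ := 1 / (2 * (R + 1)) with hydef
      have hprod : (1 - y) ^ 4 * (1 + y) ^ 4 ≤ 1 := by
        rw [← mul_pow]
        exact pow_le_one₀ (by nlinarith) (by nlinarith)
      have heq : ((R : ℝ) + 1) / (R + 3) = 1 / (1 + 4 * y) := by
        rw [hydef]; field_simp; ring
      rw [heq, le_div_iff₀ (by positivity)]
      push_cast at hbern
      have : 0 ≤ (1 - y) ^ 4 := by positivity
      nlinarith

lemma modeProb_mul_le (hk : 8 ≤ k) {R : ℕ} (hR : 1 ≤ R) :
    modeProb k (k * R) ≤ modeProb k k * (6 / ((R + 1) * (R + 2))) := by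
  induction R, hR using Nat.le_induction with
  | base => norm_num
  | succ R hR ih =>
    calc _ ≤ modeProb k (k * R) * ((R + 1) / (R + 3)) := modeProb_block_le hk R
      _ ≤ modeProb k k * (6 / ((R + 1) * (R + 2))) * ((R + 1) / (R + 3)) := by gcongr
      _ = _ := by push_cast; field_simp; ring

lemma modeProb_le_of_le (hk : 8 ≤ k) {T s : ℕ} (hT : T ≤ k) (hs : T ≤ s) :
    modeProb k s ≤ modeProb k T * (6 / (((s / k : ℕ) + 1) * ((s / k : ℕ) + 2))) := by
  have hk0 : 0 < k := by omega
  have hm := modeProb_nonneg k T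
  rcases Nat.eq_zero_or_pos (s / k) with h | h
  · rw [h]
    have := modeProb_antitone hk0 hs
    norm_num
    linarith
  · calc modeProb k s ≤ modeProb k (k * (s / k)) := modeProb_antitone hk0 (Nat.mul_div_le s k)
      _ ≤ modeProb k k * (6 / (((s / k : ℕ) + 1) * ((s / k : ℕ) + 2))) := modeProb_mul_le hk h
      _ ≤ _ := by gcongr; exact modeProb_antitone hk0 hT

lemma sum_range_mul_div_le (hk : 0 < k) (n : ℕ) :
    ∑ s ∈ Finset.range (k * n), (6 : ℝ) / (((s / k : ℕ) + 1) * ((s / k : ℕ) + 2)) ≤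
      6 * k * (1 - 1 / (n + 1)) := by
  induction n with
  | zero => simp
  | succ n ih =>
    rw [mul_add, mul_one, Finset.sum_range_add]
    have : ∀ t ∈ Finset.range k,
        (6 : ℝ) / ((((k * n + t) / k : ℕ) + 1) * (((k * n + t) / k : ℕ) + 2)) =
          6 / ((n + 1) * (n + 2)) := by
      intro t ht
      rw [Nat.mul_add_div hk, Nat.div_eq_of_lt (Finset.mem_range.1 ht), add_zero]
    rw [Finset.sum_congr rfl this, Finset.sum_const, Finset.card_range, nsmul_eq_mul]
    refine (add_le_add_left ih _).trans (le_of_eq ?_)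
    push_cast
    field_simp
    ring

lemma sum_Ico_modeProb_le (hk : 8 ≤ k) {T : ℕ} (hT : T ≤ k) (n : ℕ) :
    ∑ s ∈ Finset.Ico T n, modeProb k s ≤ modeProb k T * (6 * k) := by
  have hk0 : 0 < k := by omega
  have hm := modeProb_nonneg k T
  calc ∑ s ∈ Finset.Ico T n, modeProb k s
      ≤ ∑ s ∈ Finset.Ico T n, modeProb k T * (6 / (((s / k : ℕ) + 1) * ((s / k : ℕ) + 2))) :=
        Finset.sum_le_sum fun s hs => modeProb_le_of_le hk hT (Finset.mem_Ico.1 hs).1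
    _ ≤ ∑ s ∈ Finset.range (k * n), modeProb k T *
          (6 / (((s / k : ℕ) + 1) * ((s / k : ℕ) + 2))) := by
        refine Finset.sum_le_sum_of_subset_of_nonneg ?_ fun s _ _ => by positivity
        intro s hs
        have := (Finset.mem_Ico.1 hs).2
        rw [Finset.mem_range]
        nlinarith
    _ = modeProb k T * ∑ s ∈ Finset.range (k * n),
          (6 / (((s / k : ℕ) + 1) * ((s / k : ℕ) + 2)) : ℝ) := by rw [Finset.mul_sum]
    _ ≤ modeProb k T * (6 * k) := by
        gcongr
        refine (sum_range_mul_div_le hk0 n).trans ?_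
        have : (0 : ℝ) ≤ 1 / (n + 1) := by positivity
        have hk' : (0 : ℝ) ≤ 6 * k := by positivity
        nlinarith

/-- A bound, uniform in the dimension, for the weighted collision sum of two directed walks. -/
lemma sum_modeProb_rpow_le (hk : 8 ≤ k) {g : ℝ} {T : ℕ} (hT : T ≤ k) (hg : g + 2 ≤ T) (n : ℕ) :
    ∑ s ∈ Finset.range n, modeProb k s * (k : ℝ) ^ min (s : ℝ) (g + 1) ≤
      (∑ s ∈ Finset.range T, (s.factorial : ℝ)) + 6 * T.factorial := by
  have hk0 : 0 < k := by omega
  have hk1 : (1 : ℝ) ≤ k := by exact_mod_cast (by omega : 1 ≤ k)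
  have hkp : (0 : ℝ) < k := by positivity
  have hmin1 : ∀ s, modeProb k s * (k : ℝ) ^ min (s : ℝ) (g + 1) ≤ s.factorial := by
    intro s
    refine le_trans ?_ (modeProb_mul_pow_le hk0 s)
    have := modeProb_nonneg k s
    gcongr
    rw [← Real.rpow_natCast]
    exact Real.rpow_le_rpow_of_exponent_le hk1 (min_le_left _ _)
  have hnn : ∀ s, 0 ≤ modeProb k s * (k : ℝ) ^ min (s : ℝ) (g + 1) := fun s =>
    mul_nonneg (modeProb_nonneg _ _) (by positivity)
  calc _ ≤ ∑ s ∈ Finset.range T ∪ Finset.Ico T n,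
          modeProb k s * (k : ℝ) ^ min (s : ℝ) (g + 1) := by
        refine Finset.sum_le_sum_of_subset_of_nonneg ?_ fun s _ _ => hnn s
        intro s hs
        simp only [Finset.mem_union, Finset.mem_range, Finset.mem_Ico] at *
        omega
    _ = (∑ s ∈ Finset.range T, modeProb k s * (k : ℝ) ^ min (s : ℝ) (g + 1)) +
          ∑ s ∈ Finset.Ico T n, modeProb k s * (k : ℝ) ^ min (s : ℝ) (g + 1) := by
        refine Finset.sum_union (Finset.disjoint_left.2 fun s => ?_)
        simp only [Finset.mem_range, Finset.mem_Ico]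
        omega
    _ ≤ _ := by
        refine add_le_add (Finset.sum_le_sum fun s _ => hmin1 s) ?_
        calc _ ≤ ∑ s ∈ Finset.Ico T n, modeProb k s * (k : ℝ) ^ (g + 1) := by
              refine Finset.sum_le_sum fun s _ => ?_
              have := modeProb_nonneg k s
              gcongr
              exact min_le_right _ _
          _ ≤ modeProb k T * (6 * k) * (k : ℝ) ^ (g + 1) := by
              rw [← Finset.sum_mul]
              gcongr
              exact sum_Ico_modeProb_le hk hT n
          _ = 6 * (modeProb k T * (k : ℝ) ^ (g + 2)) := by
              rw [show g + 2 = (g + 1) + 1 by ring, Real.rpow_add hkp (g + 1) 1, Real.rpow_one]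
              ring
          _ ≤ 6 * (modeProb k T * (k : ℝ) ^ T) := by
              have := modeProb_nonneg k T
              gcongr
              rw [← Real.rpow_natCast]
              exact Real.rpow_le_rpow_of_exponent_le hk1 hg
          _ ≤ 6 * T.factorial := by gcongr; exact modeProb_mul_pow_le hk0 T

end Collision

section SecondMoment

variable {k : ℕ}

/-- The weight `l` for a coincidence (`x = 0`) at one of the times in `A`. -/
noncomputable def meetWeight (A : Finset ℕ) (l : ℝ) (t : ℕ) (x : Fin k → ℤ) : ℝ :=
  if t ∈ A ∧ x = 0 then l else 1

/-- The expected product of the coincidence weights over the next `r` steps of two independent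
directed walks whose difference at time `t` is given. -/
noncomputable def meetSum (k : ℕ) (A : Finset ℕ) (l : ℝ) : ℕ → ℕ → (Fin k → ℤ) → ℝ
  | 0, _ => fun _ => 1
  | r + 1, t => avgDiff k fun y => meetWeight A l (t + 1) y * meetSum k A l r (t + 1) y

/-- Comparison of the coincidence sum with a supersolution `Φ` of the renewal inequality. -/
lemma meetSum_le (hk : 0 < k) {A : Finset ℕ} {l : ℝ} (hl : 0 ≤ l) {Φ : ℕ → ℝ}
    (hΦ0 : ∀ t, 0 ≤ Φ t)
    (hΦ : ∀ t ∈ A, ∀ r, 1 + ∑ s ∈ Finset.range r,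
      (if t + s + 1 ∈ A then l * Φ (t + s + 1) else 0) * modeProb k (s + 1) ≤ Φ t)
    (r t : ℕ) (x : Fin k → ℤ) :
    meetSum k A l r t x ≤ 1 + ∑ s ∈ Finset.range r,
      (if t + s + 1 ∈ A then l * Φ (t + s + 1) else 0) * collideProb k (s + 1) x := by
  induction r generalizing t x with
  | zero => simp [meetSum]
  | succ r ih =>
    set B : ℕ → ℝ := fun τ => if τ ∈ A then l * Φ τ else 0 with hB
    have hB0 : ∀ τ, 0 ≤ B τ := by
      intro τ
      simp only [hB]
      split_ifs
      exacts [mul_nonneg hl (hΦ0 τ), le_rfl]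
    have hpt : ∀ y, meetWeight A l (t + 1) y * meetSum k A l r (t + 1) y ≤
        ((fun _ => (1 : ℝ)) + (∑ s ∈ Finset.range r, B (t + 1 + s + 1) • collideProb k (s + 1)) +
          B (t + 1) • originInd k : (Fin k → ℤ) → ℝ) y := by
      intro y
      simp only [Pi.add_apply, Finset.sum_apply, Pi.smul_apply, smul_eq_mul]
      have hih := ih (t + 1) y
      by_cases h : t + 1 ∈ A ∧ y = 0
      · have hV : meetSum k A l r (t + 1) y ≤ Φ (t + 1) := by
          refine hih.trans ((add_le_add_right (Finset.sum_le_sum fun s _ => ?_) 1).trans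
            (hΦ (t + 1) h.1 r))
          exact mul_le_mul_of_nonneg_left (collideProb_le_modeProb hk _ _) (hB0 _)
        have hBt : B (t + 1) * originInd k y = l * Φ (t + 1) := by
          simp [hB, h.1, h.2, originInd]
        rw [hBt, meetWeight, if_pos h]
        have h1 : 0 ≤ ∑ s ∈ Finset.range r, B (t + 1 + s + 1) * collideProb k (s + 1) y :=
          Finset.sum_nonneg fun s _ => mul_nonneg (hB0 _) (collideProb_nonneg _ _)
        have h2 := mul_le_mul_of_nonneg_left hV hl
        linarith
      · rw [meetWeight, if_neg h, one_mul]
        have := mul_nonneg (hB0 (t + 1)) (originInd_nonneg y)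
        linarith
    refine (avgDiff_mono hpt x).trans (le_of_eq ?_)
    simp only [map_add, map_sum, map_smul, avgDiff_const hk, ← collideProb_succ, Pi.add_apply,
      Finset.sum_apply, Pi.smul_apply, smul_eq_mul]
    rw [Finset.sum_range_succ', add_assoc]
    congr 2
    refine Finset.sum_congr rfl fun s _ => ?_
    rw [show t + 1 + s + 1 = t + (s + 1) + 1 by ring]

/-- The position after `t` steps of the directed walk with steps `I`. -/
def walkPos {n : ℕ} (I : Fin n → Fin k) (t : ℕ) : Fin k → ℤ :=
  ∑ i : Fin n, if (i : ℕ) < t then Pi.single (I i) 1 else 0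

@[simp] lemma walkPos_zero {n : ℕ} (I : Fin n → Fin k) : walkPos I 0 = 0 := by simp [walkPos]

lemma walkPos_cons {n : ℕ} (a : Fin k) (I : Fin n → Fin k) (t : ℕ) :
    walkPos (Fin.cons a I : Fin (n + 1) → Fin k) (t + 1) = Pi.single a 1 + walkPos I t := by
  simp [walkPos, Fin.sum_univ_succ]

lemma walkPos_succ {n : ℕ} (I : Fin n → Fin k) {t : ℕ} (ht : t < n) :
    walkPos I (t + 1) = walkPos I t + Pi.single (I ⟨t, ht⟩) 1 := by
  have h : ∀ i : Fin n, (if (i : ℕ) < t + 1 then (Pi.single (I i) 1 : Fin k → ℤ) else 0) =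
      (if (i : ℕ) < t then Pi.single (I i) 1 else 0) +
        if i = ⟨t, ht⟩ then Pi.single (I i) 1 else 0 := by
    intro i
    rcases lt_trichotomy (i : ℕ) t with hi | hi | hi
    · have : i ≠ ⟨t, ht⟩ := by rintro rfl; simp at hi
      simp [hi, this, Nat.lt_succ_of_lt hi]
    · have : i = ⟨t, ht⟩ := Fin.ext hi
      simp [this]
    · have h1 : i ≠ ⟨t, ht⟩ := by rintro rfl; simp at hi
      have h2 : ¬ (i : ℕ) < t + 1 := by omega
      have h3 : ¬ (i : ℕ) < t := by omega
      simp [h1, h2, h3]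
  simp only [walkPos, h, Finset.sum_add_distrib, Finset.sum_ite_eq', Finset.mem_univ, if_true]

lemma sum_fin_succ_fun {α M : Type*} [Fintype α] [AddCommMonoid M] {n : ℕ}
    (f : (Fin (n + 1) → α) → M) :
    ∑ I, f I = ∑ a, ∑ I : Fin n → α, f (Fin.cons a I) := by
  rw [← Fintype.sum_prod_type']
  exact (Fintype.sum_equiv (Fin.consEquiv fun _ => α) _ _ fun _ => rfl).symm

lemma meetSum_eq (A : Finset ℕ) (l : ℝ) (r t : ℕ) (x : Fin k → ℤ) :
    meetSum k A l r t x = (k : ℝ)⁻¹ ^ (2 * r) * ∑ I : Fin r → Fin k, ∑ J : Fin r → Fin k,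
      ∏ s ∈ Finset.range r,
        meetWeight A l (t + s + 1) (x + walkPos I (s + 1) - walkPos J (s + 1)) := by
  induction r generalizing t x with
  | zero => simp [meetSum]
  | succ r ih =>
    rw [meetSum, avgDiff_apply, sum_fin_succ_fun]
    simp only [sum_fin_succ_fun (fun J : Fin (r + 1) → Fin k => _)]
    have hc : ∀ a b : Fin k, ∀ I J : Fin r → Fin k,
        ∏ s ∈ Finset.range (r + 1), meetWeight A l (t + s + 1)
          (x + walkPos (Fin.cons a I : Fin (r + 1) → Fin k) (s + 1) -
            walkPos (Fin.cons b J : Fin (r + 1) → Fin k) (s + 1)) =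
        meetWeight A l (t + 1) (x + Pi.single a 1 - Pi.single b 1) *
        ∏ s ∈ Finset.range r, meetWeight A l (t + 1 + s + 1)
          ((x + Pi.single a 1 - Pi.single b 1) + walkPos I (s + 1) - walkPos J (s + 1)) := by
      intro a b I J
      simp only [walkPos_cons]
      rw [Finset.prod_range_succ', mul_comm]
      simp only [walkPos_zero, add_zero]
      congr 1
      refine Finset.prod_congr rfl fun s _ => ?_
      rw [show t + (s + 1) + 1 = t + 1 + s + 1 by ring]
      congr 1
      abel
    simp only [hc, ih, ← Finset.mul_sum]
    rw [show 2 * (r + 1) = 2 + 2 * r by ring, pow_add, mul_assoc]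
    congr 1
    rw [Finset.mul_sum]
    refine Finset.sum_congr rfl fun a _ => ?_
    rw [Finset.sum_comm, Finset.mul_sum]
    refine Finset.sum_congr rfl fun b _ => ?_
    simp only [Finset.mul_sum]
    refine Finset.sum_congr rfl fun I _ => Finset.sum_congr rfl fun J _ => ?_
    ring

lemma second_moment_le {Ω ι : Type*} [MeasurableSpace Ω] [Fintype ι] (P : Measure Ω)
    [IsProbabilityMeasure P] (E : ι → Set Ω) (hE : ∀ i, MeasurableSet (E i)) (μ : ℝ) :
    2 * μ * ∑ i, P.real (E i) - μ ^ 2 * ∑ i, ∑ j, P.real (E i ∩ E j) ≤ P.real (⋃ i, E i) := by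
  have hU : MeasurableSet (⋃ i, E i) := MeasurableSet.iUnion hE
  have hint : ∀ S : Set Ω, MeasurableSet S → Integrable (S.indicator fun _ => (1 : ℝ)) P :=
    fun S hS => (integrable_const 1).indicator hS
  have hval : ∀ S : Set Ω, MeasurableSet S → ∫ ω, S.indicator (fun _ => (1 : ℝ)) ω ∂P = P.real S :=
    fun S hS => integral_indicator_one hS
  have hi1 : Integrable (fun ω => ∑ i, (E i).indicator (fun _ => (1 : ℝ)) ω) P :=
    integrable_finsetSum _ fun i _ => hint _ (hE i)
  have hi2 : Integrable (fun ω => ∑ i, ∑ j, (E i ∩ E j).indicator (fun _ => (1 : ℝ)) ω) P :=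
    integrable_finsetSum _ fun i _ => integrable_finsetSum _ fun j _ =>
      hint _ ((hE i).inter (hE j))
  have hleft : ∫ ω, (2 * μ * ∑ i, (E i).indicator (fun _ => (1 : ℝ)) ω -
      μ ^ 2 * ∑ i, ∑ j, (E i ∩ E j).indicator (fun _ => (1 : ℝ)) ω) ∂P =
      2 * μ * ∑ i, P.real (E i) - μ ^ 2 * ∑ i, ∑ j, P.real (E i ∩ E j) := by
    rw [integral_sub (hi1.const_mul _) (hi2.const_mul _), integral_const_mul, integral_const_mul,
      integral_finsetSum _ fun i _ => hint _ (hE i), integral_finsetSum _ fun i _ =>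
        integrable_finsetSum _ fun j _ => hint _ ((hE i).inter (hE j))]
    congr 2
    · exact Finset.sum_congr rfl fun i _ => hval _ (hE i)
    · refine Finset.sum_congr rfl fun i _ => ?_
      rw [integral_finsetSum _ fun j _ => hint _ ((hE i).inter (hE j))]
      exact Finset.sum_congr rfl fun j _ => hval _ ((hE i).inter (hE j))
  rw [← hleft, ← hval _ hU]
  refine integral_mono ((hi1.const_mul _).sub (hi2.const_mul _)) (hint _ hU) fun ω => ?_
  have hprod : ∑ i, ∑ j, (E i ∩ E j).indicator (fun _ => (1 : ℝ)) ω =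
      (∑ i, (E i).indicator (fun _ => (1 : ℝ)) ω) ^ 2 := by
    rw [sq, Finset.sum_mul_sum]
    refine Finset.sum_congr rfl fun i _ => Finset.sum_congr rfl fun j _ => ?_
    by_cases hi : ω ∈ E i <;> by_cases hj : ω ∈ E j <;> simp [hi, hj]
  simp only [hprod]
  by_cases hω : ω ∈ ⋃ i, E i
  · rw [Set.indicator_of_mem hω]
    nlinarith [sq_nonneg (1 - μ * ∑ i, (E i).indicator (fun _ => (1 : ℝ)) ω)]
  · have : ∀ i, ω ∉ E i := fun i hi => hω (Set.mem_iUnion.2 ⟨i, hi⟩)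
    simp [this]

end SecondMoment

section UpperBound

variable {d k : ℕ}

/-- Extension by zero of a vector on the first `k` coordinates. -/
def extendZero (d : ℕ) (x : Fin k → ℤ) : Fin d → ℤ :=
  fun i => if h : (i : ℕ) < k then x ⟨i, h⟩ else 0

lemma extendZero_injective (hkd : k ≤ d) : Function.Injective (extendZero d (k := k)) := by
  intro x y h
  ext a
  have := congrFun h (Fin.castLE hkd a)
  simpa [extendZero] using this

lemma extendZero_add_single (hkd : k ≤ d) (x : Fin k → ℤ) (a : Fin k) :
    extendZero d (x + Pi.single a 1) = extendZero d x + Pi.single (Fin.castLE hkd a) 1 := by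
  ext i
  by_cases h : (i : ℕ) < k
  · simp only [extendZero, h, dif_pos, Pi.add_apply, Pi.single_apply, Fin.ext_iff, Fin.val_castLE]
  · have : ¬ (i : ℕ) = a := by have := a.2; omega
    simp [extendZero, h, Fin.ext_iff, this]

lemma sum_etaK_mul_walkPos (hkd : k ≤ d) {n : ℕ} (I : Fin n → Fin k) {t : ℕ} (ht : t ≤ n) :
    ∑ i, (etaK d k i : ℝ) * (extendZero d (walkPos I t) i : ℝ) = t := by
  induction t with
  | zero => simp [extendZero]
  | succ t ih =>
    rw [walkPos_succ I (by omega), extendZero_add_single hkd, sum_add_single_mul, ih (by omega)]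
    simp [etaK]

/-- The site probed at time `t` by the walk `I` started at height `h`, having already descended
once at each earlier time of `A`. -/
def probeSite (d : ℕ) (A : Finset ℕ) (h : ℤ) {n : ℕ} (I : Fin n → Fin k) (t : ℕ) :
    (Fin d → ℤ) × ℤ :=
  (extendZero d (walkPos I t), h + t - (A.filter (· < t)).card)

lemma probeSite_time_eq (hkd : k ≤ d) {A : Finset ℕ} {h : ℤ} {n : ℕ} {I J : Fin n → Fin k}
    {s t : ℕ} (hs : s ≤ n) (ht : t ≤ n) (heq : probeSite d A h I s = probeSite d A h J t) :
    s = t := by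
  have h1 := sum_etaK_mul_walkPos hkd I hs
  have h2 := sum_etaK_mul_walkPos hkd J ht
  have h3 : extendZero d (walkPos I s) = extendZero d (walkPos J t) := congrArg Prod.fst heq
  rw [h3, h2] at h1
  exact_mod_cast h1.symm

/-- An open Lipschitz surface above the plane that is low at the origin cannot coexist with a
closed descending walk that ends below the plane. -/
lemma not_closed_of_lipschitz (hkd : k ≤ d) {α : ℝ} {ω : Config d} {A : Finset ℕ} {n : ℕ} {h : ℤ}
    (hA : A ⊆ Finset.Icc 1 n) (hn : (1 - α) * n + h ≤ A.card)
    {F : (Fin d → ℤ) → ℤ} (hF : IsLipschitzFn F)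
    (hopen : ∀ x, ω (Fin.snoc x (F x)) = true ∧ planeHt α (etaK d k) x < F x)
    (h0 : F 0 ≤ h) (I : Fin n → Fin k) :
    ω ∉ closedOn (A.image (probeSite d A h I)) := by
  intro hcl
  have key : ∀ t ≤ n, F (extendZero d (walkPos I t)) ≤ h + t - (A.filter (· < t + 1)).card := by
    intro t
    induction t with
    | zero =>
      intro _
      have : A.filter (· < 0 + 1) = ∅ := by
        refine Finset.filter_eq_empty_iff.2 fun t ht => ?_
        have := Finset.mem_Icc.1 (hA ht)
        omega
      have hz : extendZero d (0 : Fin k → ℤ) = 0 := by ext i; simp [extendZero]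
      rw [this, walkPos_zero, hz]
      simpa using h0
    | succ t ih =>
      intro ht
      have hstep : F (extendZero d (walkPos I (t + 1))) ≤ F (extendZero d (walkPos I t)) + 1 := by
        have hlip := hF (extendZero d (walkPos I (t + 1))) (extendZero d (walkPos I t)) (by
          rw [walkPos_succ I (by omega), extendZero_add_single hkd]
          simp [Pi.single_apply, apply_ite abs])
        have := (abs_le.1 hlip).2
        omega
      have hih := ih (by omega)
      by_cases hmem : t + 1 ∈ A
      · have hcard : (A.filter (· < t + 1 + 1)).card = (A.filter (· < t + 1)).card + 1 := by
          rw [← Finset.card_insert_of_notMem (s := A.filter (· < t + 1)) (a := t + 1) (by simp)]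
          congr 1
          ext s
          simp only [Finset.mem_filter, Finset.mem_insert]
          constructor
          · rintro ⟨h1, h2⟩
            by_cases hs : s = t + 1
            · exact Or.inl hs
            · exact Or.inr ⟨h1, by omega⟩
          · rintro (rfl | ⟨h1, h2⟩)
            · exact ⟨hmem, by omega⟩
            · exact ⟨h1, by omega⟩
        have hc := hcl _ (Finset.mem_image_of_mem (probeSite d A h I) hmem)
        have hne : F (extendZero d (walkPos I (t + 1))) ≠
            h + ((t + 1 : ℕ) : ℤ) - (A.filter (· < t + 1)).card := by
          intro heq
          have ho := (hopen (extendZero d (walkPos I (t + 1)))).1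
          rw [heq] at ho
          simp only [probeSite] at hc
          rw [hc] at ho
          exact Bool.false_ne_true ho
        push_cast at *
        omega
      · have hcard : A.filter (· < t + 1 + 1) = A.filter (· < t + 1) := by
          ext s
          simp only [Finset.mem_filter, and_congr_right_iff]
          intro hs
          have : s ≠ t + 1 := fun h => hmem (h ▸ hs)
          omega
        rw [hcard]
        push_cast
        omega
  have hfin := key n le_rfl
  have hall : A.filter (· < n + 1) = A := by
    refine Finset.filter_true_of_mem fun t ht => ?_
    have := Finset.mem_Icc.1 (hA ht)
    omega
  rw [hall] at hfin
  have habove := (hopen (extendZero d (walkPos I n))).2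
  rw [planeHt, sum_etaK_mul_walkPos hkd I le_rfl, Int.floor_lt] at habove
  have hfin' : (F (extendZero d (walkPos I n)) : ℝ) ≤ h + n - A.card := by exact_mod_cast hfin
  linarith

lemma measurableSet_closedOn (T : Finset ((Fin d → ℤ) × ℤ)) : MeasurableSet (closedOn T) := by
  have : closedOn T = ⋂ z ∈ T, (fun ω : Config d => ω (Fin.snoc z.1 z.2)) ⁻¹' {false} := by
    ext ω
    simp [closedOn]
  rw [this]
  exact Finset.measurableSet_biInter _ fun z _ =>
    measurable_pi_apply _ (measurableSet_singleton _)

lemma closedOn_inter [DecidableEq ((Fin d → ℤ) × ℤ)] (S T : Finset ((Fin d → ℤ) × ℤ)) :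
    closedOn S ∩ closedOn T = closedOn (S ∪ T) := by
  ext ω
  simp only [closedOn, Set.mem_inter_iff, Set.mem_ofPred_eq, Finset.mem_union]
  exact ⟨fun h z hz => hz.elim (h.1 z) (h.2 z), fun h => ⟨fun z hz => h z (Or.inl hz),
    fun z hz => h z (Or.inr hz)⟩⟩

lemma measureReal_closedOn {p : ℝ} (hp : p ≤ 1) {P : Measure (Config d)} (hP : IsBernoulli p P)
    (T : Finset ((Fin d → ℤ) × ℤ)) : P.real (closedOn T) = (1 - p) ^ T.card := by
  rw [Measure.real, measure_closedOn hP, ENNReal.toReal_pow, ENNReal.toReal_ofReal (by linarith)]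

lemma pow_card_union_probe (hkd : k ≤ d) {A : Finset ℕ} {n : ℕ} (hA : A ⊆ Finset.Icc 1 n)
    {h : ℤ} {q : ℝ} (hq : q ≠ 0) (I J : Fin n → Fin k) :
    q ^ (A.image (probeSite d A h I) ∪ A.image (probeSite d A h J)).card =
      (q ^ A.card) ^ 2 * ∏ s ∈ Finset.range n,
        meetWeight A q⁻¹ (0 + s + 1) (0 + walkPos I (s + 1) - walkPos J (s + 1)) := by
  classical
  have hle : ∀ t ∈ A, t ≤ n := fun t ht => (Finset.mem_Icc.1 (hA ht)).2
  have hinj : ∀ K : Fin n → Fin k, Set.InjOn (probeSite d A h K) A := fun K s hs t ht heq =>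
    probeSite_time_eq hkd (hle s hs) (hle t ht) heq
  have hcard : ∀ K : Fin n → Fin k, (A.image (probeSite d A h K)).card = A.card := fun K =>
    Finset.card_image_of_injOn (hinj K)
  have hinter : A.image (probeSite d A h I) ∩ A.image (probeSite d A h J) =
      (A.filter fun t => walkPos I t = walkPos J t).image (probeSite d A h I) := by
    ext z
    simp only [Finset.mem_inter, Finset.mem_image, Finset.mem_filter]
    constructor
    · rintro ⟨⟨s, hs, rfl⟩, t, ht, heq⟩
      obtain rfl := probeSite_time_eq hkd (hle t ht) (hle s hs) heq
      exact ⟨t, ⟨ht, extendZero_injective hkd (congrArg Prod.fst heq).symm⟩, rfl⟩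
    · rintro ⟨s, ⟨hs, heq⟩, rfl⟩
      exact ⟨⟨s, hs, rfl⟩, s, hs, by simp [probeSite, heq]⟩
  have hov : (A.image (probeSite d A h I) ∩ A.image (probeSite d A h J)).card =
      (A.filter fun t => walkPos I t = walkPos J t).card := by
    rw [hinter]
    exact Finset.card_image_of_injOn ((hinj I).mono
      (Finset.coe_subset.2 (Finset.filter_subset _ _)))
  have hprod : ∏ s ∈ Finset.range n,
      meetWeight A q⁻¹ (0 + s + 1) (0 + walkPos I (s + 1) - walkPos J (s + 1)) =
      q⁻¹ ^ (A.filter fun t => walkPos I t = walkPos J t).card := by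
    have h1 : ∏ s ∈ Finset.range n,
        meetWeight A q⁻¹ (0 + s + 1) (0 + walkPos I (s + 1) - walkPos J (s + 1)) =
        ∏ t ∈ Finset.Icc 1 n, if t ∈ A ∧ walkPos I t = walkPos J t then q⁻¹ else 1 := by
      rw [Finset.prod_bij (fun s _ => s + 1)]
      · intro s hs
        have := Finset.mem_range.1 hs
        exact Finset.mem_Icc.2 ⟨by omega, by omega⟩
      · intro a _ b _ hab
        omega
      · intro t ht
        have := Finset.mem_Icc.1 ht
        exact ⟨t - 1, Finset.mem_range.2 (by omega), by omega⟩
      · intro s _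
        simp only [meetWeight, zero_add, sub_eq_zero]
    rw [h1, ← Finset.prod_filter, Finset.prod_const]
    congr 2
    ext t
    simp only [Finset.mem_filter]
    exact ⟨fun h => h.2, fun h => ⟨hA h.1, h⟩⟩
  have hui := Finset.card_union_add_card_inter (A.image (probeSite d A h I))
    (A.image (probeSite d A h J))
  rw [hcard, hcard, hov] at hui
  rw [hprod, inv_pow, ← div_eq_mul_inv, eq_div_iff (pow_ne_zero _ hq), ← pow_add, hui, ← pow_mul]
  congr 1
  ring

/-- With probability at least one half some walk has all its probed sites closed. -/
lemma half_le_measure_closed_walk (hk : 0 < k) (hkd : k ≤ d) {p : ℝ} (hp : p < 1)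
    {P : Measure (Config d)} (hP : IsBernoulli p P) {A : Finset ℕ} {n : ℕ}
    (hA : A ⊆ Finset.Icc 1 n) (h : ℤ) (hmeet : meetSum k A (1 - p)⁻¹ n 0 0 ≤ 2) :
    1 / 2 ≤ P.real (⋃ I : Fin n → Fin k, closedOn (A.image (probeSite d A h I))) := by
  classical
  have := hP.1
  have hq : 0 < 1 - p := by linarith
  have hle : ∀ t ∈ A, t ≤ n := fun t ht => (Finset.mem_Icc.1 (hA ht)).2
  have hcard : ∀ K : Fin n → Fin k, (A.image (probeSite d A h K)).card = A.card := fun K =>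
    Finset.card_image_of_injOn fun s hs t ht heq =>
      probeSite_time_eq hkd (hle s hs) (hle t ht) heq
  have hkp : (0 : ℝ) < k := by exact_mod_cast hk
  set m : ℝ := (k : ℝ) ^ n * (1 - p) ^ A.card with hm
  have hm0 : 0 < m := by positivity
  have hsm := second_moment_le P (fun I : Fin n → Fin k => closedOn (A.image (probeSite d A h I)))
    (fun I => measurableSet_closedOn _) (1 / (2 * m))
  have h1 : ∑ I : Fin n → Fin k, P.real (closedOn (A.image (probeSite d A h I))) = m := by
    simp [measureReal_closedOn hp.le hP, hcard, hm]
  have h2 : ∑ I : Fin n → Fin k, ∑ J : Fin n → Fin k,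
      P.real (closedOn (A.image (probeSite d A h I)) ∩ closedOn (A.image (probeSite d A h J))) =
      m ^ 2 * meetSum k A (1 - p)⁻¹ n 0 0 := by
    simp only [closedOn_inter, measureReal_closedOn hp.le hP,
      pow_card_union_probe hkd hA hq.ne', ← Finset.mul_sum]
    have hinv : ((k : ℝ) ^ n) ^ 2 * (k : ℝ)⁻¹ ^ (2 * n) = 1 := by
      rw [← pow_mul, mul_comm n 2, ← mul_pow, mul_inv_cancel₀ hkp.ne', one_pow]
    rw [meetSum_eq, hm, mul_pow, mul_right_comm, ← mul_assoc (((k : ℝ) ^ n) ^ 2), hinv, one_mul,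
      mul_comm]
  rw [h1, h2] at hsm
  have h3 : 2 * (1 / (2 * m)) * m = 1 := by field_simp
  have h4 : (1 / (2 * m)) ^ 2 * (m ^ 2 * meetSum k A (1 - p)⁻¹ n 0 0) =
      meetSum k A (1 - p)⁻¹ n 0 0 / 4 := by field_simp; ring
  rw [h3, h4] at hsm
  linarith

/-- If closed descending walks of arbitrary depth satisfy the second moment bound, open Lipschitz
surfaces above the plane do not exist almost surely. -/
theorem measure_LIP_le_half (hk : 0 < k) (hkd : k ≤ d) {α p : ℝ} (hp : p < 1)
    {P : Measure (Config d)} (hP : IsBernoulli p P)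
    (hex : ∀ h : ℕ, ∃ (n : ℕ) (A : Finset ℕ), A ⊆ Finset.Icc 1 n ∧ (1 - α) * n + h ≤ A.card ∧
      meetSum k A (1 - p)⁻¹ n 0 0 ≤ 2) :
    P (LIP α (etaK d k)) ≤ 1 / 2 := by
  have := hP.1
  let low : ℕ → Set (Config d) := fun h => {ω | ∃ F : (Fin d → ℤ) → ℤ, IsLipschitzFn F ∧
    (∀ x, ω (Fin.snoc x (F x)) = true ∧ planeHt α (etaK d k) x < F x) ∧ F 0 ≤ h}
  have hU : LIP α (etaK d k) ⊆ ⋃ h, low h := by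
    rintro ω ⟨F, hF, ho⟩
    exact Set.mem_iUnion.2 ⟨(F 0).toNat, F, hF, ho, Int.self_le_toNat _⟩
  have hmono : Monotone low := by
    rintro a b hab ω ⟨F, hF, ho, h0⟩
    exact ⟨F, hF, ho, h0.trans (by exact_mod_cast hab)⟩
  refine (measure_mono hU).trans ?_
  rw [hmono.measure_iUnion]
  refine iSup_le fun h => ?_
  obtain ⟨n, A, hA, hn, hmeet⟩ := hex h
  set E := ⋃ I : Fin n → Fin k, closedOn (A.image (probeSite d A h I)) with hE
  have hEm : MeasurableSet E := MeasurableSet.iUnion fun I => measurableSet_closedOn _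
  have hhalf := half_le_measure_closed_walk hk hkd hp hP hA h hmeet
  have hsub : low h ⊆ Eᶜ := by
    rintro ω ⟨F, hF, ho, h0⟩ hω
    obtain ⟨I, hI⟩ := Set.mem_iUnion.1 hω
    exact not_closed_of_lipschitz hkd hA (by exact_mod_cast hn) hF ho h0 I hI
  refine (measure_mono hsub).trans ?_
  have hreal : P.real Eᶜ ≤ 1 / 2 := by
    rw [probReal_compl_eq_one_sub hEm]
    linarith
  rw [← ENNReal.ofReal_toReal (measure_ne_top P Eᶜ)]
  calc ENNReal.ofReal (P.real Eᶜ) ≤ ENNReal.ofReal (1 / 2) := ENNReal.ofReal_le_ofReal hreal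
    _ = 1 / 2 := by rw [ENNReal.ofReal_div_of_pos (by norm_num)]; simp

end UpperBound

section Regime

variable {d k : ℕ}

/-- Closing the times `⌈g j⌉` costs at most a bounded factor in the second moment, provided the
weight of a coincidence is at most a small multiple of `k ^ g`. -/
lemma meetSum_ceil_le_two (hk : 8 ≤ k) {g : ℝ} (hg : 1 ≤ g) {T : ℕ} (hT : T ≤ k)
    (hgT : g + 2 ≤ T) {l : ℝ} (hl : 0 ≤ l)
    (hlk : 2 * l * ((∑ s ∈ Finset.range T, (s.factorial : ℝ)) + 6 * T.factorial) ≤ (k : ℝ) ^ g)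
    (M n : ℕ) :
    meetSum k ((Finset.Icc 1 M).image fun j : ℕ => ⌈g * j⌉₊) l n 0 0 ≤ 2 := by
  set N : ℕ → ℕ := fun j => ⌈g * j⌉₊ with hN
  set A := (Finset.Icc 1 M).image N with hA
  set K : ℝ := (∑ s ∈ Finset.range T, (s.factorial : ℝ)) + 6 * T.factorial with hK
  have hg0 : 0 < g := by linarith
  have hk1 : (1 : ℝ) ≤ k := by exact_mod_cast (by omega : 1 ≤ k)
  have hk0 : (0 : ℝ) < k := by linarith
  have hNlow : ∀ j, g * j ≤ N j := fun j => Nat.le_ceil _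
  have hNup : ∀ j, (N j : ℝ) < g * j + 1 := fun j => Nat.ceil_lt_add_one (by positivity)
  have hNmono : Monotone N := fun a b hab => Nat.ceil_mono (by gcongr)
  have hfloor : ∀ j, ⌊(N j : ℝ) / g⌋₊ = j := by
    intro j
    rw [Nat.floor_eq_iff (by positivity), le_div_iff₀ hg0, div_lt_iff₀ hg0]
    constructor <;> nlinarith [hNlow j, hNup j]
  set Φ : ℕ → ℝ := fun t => 2 * (k : ℝ) ^ ((t : ℝ) - g * ⌊(t : ℝ) / g⌋₊) with hΦ
  have hΦN : ∀ j, Φ (N j) = 2 * (k : ℝ) ^ ((N j : ℝ) - g * j) := by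
    intro j
    simp only [hΦ, hfloor]
  have hΦ0 : ∀ t, 0 ≤ Φ t := fun t => by positivity
  have hterm : ∀ j s, (if N j + s + 1 ∈ A then l * Φ (N j + s + 1) else 0) * modeProb k (s + 1) ≤
      l * Φ (N j) * (k : ℝ) ^ (-g) *
        (modeProb k (s + 1) * (k : ℝ) ^ min (((s + 1 : ℕ) : ℝ)) (g + 1)) := by
    intro j s
    have hm := modeProb_nonneg k (s + 1)
    split_ifs with hmem
    · obtain ⟨i, -, hi⟩ := Finset.mem_image.1 hmem
      have hji : j + 1 ≤ i := by
        by_contra hlt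
        have := hNmono (by omega : i ≤ j)
        omega
      have hji' : (j : ℝ) + 1 ≤ i := by exact_mod_cast hji
      have hi' : (N i : ℝ) = N j + ((s + 1 : ℕ) : ℝ) := by
        rw [hi]
        push_cast
        ring
      have hexp : (N i : ℝ) - g * i ≤
          (N j - g * j) + -g + min (((s + 1 : ℕ) : ℝ)) (g + 1) := by
        rcases min_choice (((s + 1 : ℕ) : ℝ)) (g + 1) with h | h <;> rw [h]
        · nlinarith
        · linarith [hNlow j, hNup i]
      have hle : Φ (N i) ≤ Φ (N j) * (k : ℝ) ^ (-g) *
          (k : ℝ) ^ min (((s + 1 : ℕ) : ℝ)) (g + 1) := by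
        rw [hΦN, hΦN, mul_assoc, mul_assoc, ← Real.rpow_add hk0, ← Real.rpow_add hk0, ← add_assoc]
        exact mul_le_mul_of_nonneg_left (Real.rpow_le_rpow_of_exponent_le hk1 hexp) zero_le_two
      rw [← hi]
      calc l * Φ (N i) * modeProb k (s + 1)
          ≤ l * (Φ (N j) * (k : ℝ) ^ (-g) * (k : ℝ) ^ min (((s + 1 : ℕ) : ℝ)) (g + 1)) *
            modeProb k (s + 1) := by gcongr
        _ = _ := by ring
    · rw [zero_mul]
      have := hΦ0 (N j)
      positivity
  have hrenew : ∀ j r, 1 + ∑ s ∈ Finset.range r,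
      (if N j + s + 1 ∈ A then l * Φ (N j + s + 1) else 0) * modeProb k (s + 1) ≤ Φ (N j) := by
    intro j r
    have h1 := Finset.sum_le_sum fun s (_ : s ∈ Finset.range r) => hterm j s
    rw [← Finset.mul_sum] at h1
    have h2 := sum_modeProb_rpow_le hk hT hgT (r + 1)
    rw [Finset.sum_range_succ'] at h2
    have h3 : 0 ≤ modeProb k 0 * (k : ℝ) ^ min ((0 : ℕ) : ℝ) (g + 1) :=
      mul_nonneg (modeProb_nonneg k 0) (by positivity)
    have h4 : 2 ≤ Φ (N j) := by
      rw [hΦN]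
      have := Real.one_le_rpow hk1 (sub_nonneg.2 (hNlow j))
      linarith
    have h5 : l * (k : ℝ) ^ (-g) * K ≤ 1 / 2 := by
      have : (k : ℝ) ^ (-g) * (k : ℝ) ^ g = 1 := by
        rw [← Real.rpow_add hk0]
        simp
      have := mul_le_mul_of_nonneg_left hlk (by positivity : 0 ≤ (k : ℝ) ^ (-g))
      nlinarith
    have h6 : l * Φ (N j) * (k : ℝ) ^ (-g) * (∑ s ∈ Finset.range r,
        modeProb k (s + 1) * (k : ℝ) ^ min (((s + 1 : ℕ) : ℝ)) (g + 1)) ≤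
        l * Φ (N j) * (k : ℝ) ^ (-g) * K :=
      mul_le_mul_of_nonneg_left (by linarith) (by have := hΦ0 (N j); positivity)
    have h7 := mul_le_mul_of_nonneg_left h5 (hΦ0 (N j))
    nlinarith
  have hmain := meetSum_le (by omega : 0 < k) (A := A) hl hΦ0 (fun t ht r => by
    obtain ⟨j, -, rfl⟩ := Finset.mem_image.1 ht
    exact hrenew j r) n 0 0
  refine hmain.trans ?_
  have h0 := hrenew 0 n
  have hN0 : N 0 = 0 := by simp [hN]
  rw [hΦN, hN0] at h0
  simp only [Nat.cast_zero, mul_zero, sub_zero, Real.rpow_zero, mul_one] at h0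
  refine le_trans ?_ h0
  gcongr with s _
  exact collideProb_le_modeProb (by omega) _ _

lemma measure_LIP_le_half_of_rpow (hk : 8 ≤ k) (hkd : k ≤ d) {α g p : ℝ} (hα : α ∈ Set.Ioo 0 1)
    (hg : 1 ≤ g) (hgα : (1 - α) * g < 1) {T : ℕ} (hT : T ≤ k) (hgT : g + 2 ≤ T) (hp : p < 1)
    (hpk : 2 * ((∑ s ∈ Finset.range T, (s.factorial : ℝ)) + 6 * T.factorial) ≤
      (1 - p) * (k : ℝ) ^ g)
    {P : Measure (Config d)} (hP : IsBernoulli p P) : P (LIP α (etaK d k)) ≤ 1 / 2 := by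
  have hq : 0 < 1 - p := by linarith
  refine measure_LIP_le_half (by omega) hkd hp hP fun h => ?_
  obtain ⟨M, hM⟩ := exists_nat_ge ((h + 1) / (1 - (1 - α) * g))
  rw [div_le_iff₀ (by linarith)] at hM
  have hstrict : StrictMono fun j : ℕ => ⌈g * j⌉₊ := by
    refine strictMono_nat_of_lt_succ fun j => ?_
    have h1 : (⌈g * j⌉₊ : ℝ) < g * j + 1 := Nat.ceil_lt_add_one (by positivity)
    have h2 : g * ((j + 1 : ℕ) : ℝ) ≤ ⌈g * ((j + 1 : ℕ) : ℝ)⌉₊ := Nat.le_ceil _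
    push_cast at h2
    have h3 : (⌈g * j⌉₊ : ℝ) < ⌈g * ((j + 1 : ℕ) : ℝ)⌉₊ := by push_cast; linarith
    exact_mod_cast h3
  refine ⟨⌈g * M⌉₊, (Finset.Icc 1 M).image fun j : ℕ => ⌈g * j⌉₊, ?_, ?_, ?_⟩
  · intro t ht
    obtain ⟨j, hj, rfl⟩ := Finset.mem_image.1 ht
    rw [Finset.mem_Icc] at hj ⊢
    refine ⟨?_, hstrict.monotone hj.2⟩
    exact hj.1.trans (hstrict.id_le j)
  · rw [Finset.card_image_of_injective _ hstrict.injective, Nat.card_Icc, Nat.add_sub_cancel]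
    have h1 : (⌈g * M⌉₊ : ℝ) < g * M + 1 := Nat.ceil_lt_add_one (by positivity)
    have h2 := mul_le_mul_of_nonneg_left h1.le (sub_nonneg.2 hα.2.le)
    nlinarith [hα.1]
  · refine meetSum_ceil_le_two hk hg hT hgT (inv_nonneg.2 hq.le) ?_ _ _
    rw [mul_comm (2 : ℝ), mul_assoc, inv_mul_le_iff₀ hq]
    exact hpk

/-- The matching order of magnitude from above: `1 - p_L` is at most of order `k ^ (-1/(1-α))`. -/
lemma exists_one_sub_critical_mul_rpow_le {α : ℝ} (hα : α ∈ Set.Ioo (0 : ℝ) 1) :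
    ∃ (C : ℝ) (k₀ : ℕ), ∀ k ≥ k₀, ∀ d ≥ k, ∀ P : ℝ → Measure (Config d),
      (∀ p ∈ Set.Icc (0 : ℝ) 1, IsBernoulli p (P p)) →
      ∀ pc, IsCriticalProb P α (etaK d k) pc → (1 - pc) * (k : ℝ) ^ (1 / (1 - α)) ≤ C := by
  have hα1 : 0 < 1 - α := by linarith [hα.2]
  set γ : ℝ := 1 / (1 - α) with hγ
  have hγ1 : 1 < γ := by
    rw [hγ, lt_div_iff₀ hα1]
    linarith [hα.1]
  set T : ℕ := ⌈γ⌉₊ + 2 with hT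
  set K : ℝ := (∑ s ∈ Finset.range T, (s.factorial : ℝ)) + 6 * T.factorial with hK
  have hK0 : 0 < K := by positivity
  have hlog : ∀ᶠ k : ℕ in atTop, 1 / (γ - 1) ≤ Real.log k :=
    (Real.tendsto_log_atTop.comp tendsto_natCast_atTop_atTop).eventually_ge_atTop _
  obtain ⟨k₁, hk₁⟩ := eventually_atTop.1 hlog
  refine ⟨2 * K * Real.exp 1, max k₁ (max 8 T), fun k hk d hd P hP pc hpc => ?_⟩
  have hk8 : 8 ≤ k := by omega
  have hTk : T ≤ k := by omega
  have hkr : (1 : ℝ) < k := by exact_mod_cast (by omega : 1 < k)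
  have hlk : 0 < Real.log k := Real.log_pos hkr
  have hinv : 1 / Real.log k ≤ γ - 1 := by
    have := hk₁ k (by omega)
    rw [div_le_iff₀ (by linarith)] at this
    rw [div_le_iff₀ hlk]
    linarith
  have hinv0 : 0 < 1 / Real.log k := by positivity
  have hkγ : (0 : ℝ) < (k : ℝ) ^ γ := by positivity
  have hpow : (k : ℝ) ^ (γ - 1 / Real.log k) * Real.exp 1 = (k : ℝ) ^ γ := by
    rw [Real.rpow_def_of_pos (by linarith), Real.rpow_def_of_pos (by linarith), ← Real.exp_add]
    congr 1
    field_simp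
    ring
  by_contra! hlt
  set q : ℝ := 2 * K * Real.exp 1 / (k : ℝ) ^ γ with hq
  have hq0 : 0 < q := by positivity
  have hqpc : pc < 1 - q := by
    have : q < 1 - pc := by rwa [hq, div_lt_iff₀ hkγ]
    linarith
  have hone := hpc.2.2 (1 - q) hqpc (by linarith)
  have hhalf := measure_LIP_le_half_of_rpow hk8 hd hα (g := γ - 1 / Real.log k) (by linarith)
    (by
      have : (1 - α) * γ = 1 := by rw [hγ]; field_simp
      nlinarith)
    hTk (by
      have := Nat.le_ceil γ
      rw [hT]
      push_cast
      linarith) (by linarith : 1 - q < 1) (by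
      rw [← hK, _root_.sub_sub_cancel, hq, ← hpow]
      refine le_of_eq ?_
      have : (0 : ℝ) < (k : ℝ) ^ (γ - 1 / Real.log k) := by positivity
      field_simp)
    (hP (1 - q) ⟨by linarith [hpc.1.1], by linarith⟩)
  rw [hone] at hhalf
  exact absurd hhalf (by norm_num)

lemma quarter_mul_rpow_lt {t : ℝ} (ht : t ∈ Set.Ioo (0 : ℝ) 1) :
    t / 4 * (1 + t) ^ (1 / t) < t / (1 + t) := by
  have ht0 := ht.1
  have h1 : 0 < 1 + t := by linarith
  have hconv := Real.strictConvexOn_mul_log.2 (x := 1) (y := 2) (by norm_num) (by norm_num)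
    (by norm_num) (sub_pos.2 ht.2) ht0 (by ring)
  have hcomb : (1 - t) • (1 : ℝ) + t • (2 : ℝ) = 1 + t := by
    simp only [smul_eq_mul]
    ring
  rw [hcomb] at hconv
  simp only [smul_eq_mul, Real.log_one, mul_zero, zero_add] at hconv
  have h4 : (1 + t) ^ (1 / t) * (1 + t) < 4 := by
    rw [← Real.rpow_add_one h1.ne', Real.rpow_def_of_pos h1, ← Real.lt_log_iff_exp_lt (by norm_num),
      show (4 : ℝ) = 2 ^ 2 by norm_num, Real.log_pow]
    have : Real.log (1 + t) * (1 / t + 1) = (1 + t) * Real.log (1 + t) / t := by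
      field_simp
    rw [this, div_lt_iff₀ ht0]
    push_cast
    linarith
  rw [lt_div_iff₀ h1]
  nlinarith

lemma eventually_quarter_le_one_sub_critical {c : ℝ} (hc : 0 < c) {φ : ℕ → ℕ}
    (hasymp : Tendsto (fun d : ℕ => (φ d : ℝ) / (d : ℝ)) atTop (nhds c))
    (hφ : Tendsto φ atTop atTop) {α : ℝ} (hα : α ∈ Set.Ioo (0 : ℝ) 1)
    {P : (n : ℕ) → ℝ → Measure (Config n)}
    (hP : ∀ n : ℕ, ∀ p ∈ Set.Icc (0 : ℝ) 1, IsBernoulli p (P n p))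
    {pc : ℕ → ℝ} (hpc : ∀ d : ℕ, 1 ≤ d → IsCriticalProb (P d) α (etaK d (φ d)) (pc d))
    (hratio : Tendsto (fun d : ℕ => ((φ d : ℝ) / (c * d)) ^ (1 / (1 - α))) atTop (nhds 1)) :
    ∀ᶠ d : ℕ in atTop, (1 - α) / 4 ≤ (1 - pc d) * (c * d) ^ (1 / (1 - α)) := by
  have hα1 : 0 < 1 - α := by linarith [hα.2]
  set γ : ℝ := 1 / (1 - α) with hγ
  have hγ1 : 1 < γ := by
    rw [hγ, lt_div_iff₀ hα1]
    linarith [hα.1]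
  set b : ℝ := 1 + (1 - α) with hb
  have hb1 : 1 < b := by linarith
  have hb0 : 0 < b := by linarith
  have hsmall : Tendsto (fun d : ℕ => 2 * ((φ d : ℝ) / d * b)⁻¹ * ((φ d * b) ^ (γ - 1))⁻¹)
      atTop (nhds (2 * (c * b)⁻¹ * 0)) := by
    refine (((hasymp.mul_const b).inv₀ (by positivity)).const_mul 2).mul ?_
    refine tendsto_inv_atTop_zero.comp ((tendsto_rpow_atTop (by linarith)).comp ?_)
    exact (tendsto_natCast_atTop_atTop.comp hφ).atTop_mul_const hb0
  have hlim := ((hratio.const_mul ((1 - α) / 4 * b ^ γ)).add_const (1 / b)).add hsmall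
  have hlt : (1 - α) / 4 * b ^ γ * 1 + 1 / b + 2 * (c * b)⁻¹ * 0 < 1 := by
    have h1 := quarter_mul_rpow_lt (t := 1 - α) ⟨hα1, by linarith [hα.1]⟩
    have h2 : (1 - α) / b + 1 / b = 1 := by
      rw [← add_div, add_comm]
      exact div_self hb0.ne'
    linarith
  filter_upwards [hlim.eventually_le_const hlt, hφ.eventually_ge_atTop 1,
    eventually_ge_atTop 1] with d hd hk hd1
  have hk0 : (0 : ℝ) < φ d := by exact_mod_cast hk
  have hk1 : (1 : ℝ) ≤ φ d := by exact_mod_cast hk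
  have hd0 : (0 : ℝ) < d := by exact_mod_cast hd1
  set X : ℝ := φ d * b with hX
  have hX0 : 0 < X := by positivity
  have hX1 : 1 < X := by nlinarith
  have hcd : 0 < (c * d) ^ γ := by positivity
  set q : ℝ := (1 - α) / 4 / (c * d) ^ γ with hq
  have hq0 : 0 < q := by positivity
  have hθ : 1 < X ^ γ := Real.one_lt_rpow hX1 (by linarith)
  have h1 : (1 - (1 - q)) * X ^ γ = (1 - α) / 4 * b ^ γ * ((φ d : ℝ) / (c * d)) ^ γ := by
    rw [_root_.sub_sub_cancel, hq, hX, Real.mul_rpow hk0.le hb0.le,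
      Real.div_rpow hk0.le (by positivity)]
    field_simp
  have h2 : (φ d : ℝ) * (X ^ γ) ^ (α - 1) = 1 / b := by
    have : γ * (α - 1) = -1 := by
      rw [hγ]
      field_simp
      ring
    rw [← Real.rpow_mul hX0.le, this, Real.rpow_neg_one, hX]
    field_simp
  have h3 : 2 * (d : ℝ) * (X ^ γ)⁻¹ = 2 * ((φ d : ℝ) / d * b)⁻¹ * (X ^ (γ - 1))⁻¹ := by
    have : X ^ γ = X ^ (γ - 1) * X := by
      rw [← Real.rpow_add_one hX0.ne', sub_add_cancel]
    have h0 : 0 < X ^ (γ - 1) := by positivity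
    rw [this, hX]
    field_simp
  have hsum : (1 - (1 - q)) * X ^ γ + φ d * (X ^ γ) ^ (α - 1) + 2 * d * (X ^ γ)⁻¹ ≤ 1 := by
    rw [h1, h2, h3]
    exact hd
  have hq1 : q ≤ 1 := by
    have h4 : 0 ≤ 1 / b := by positivity
    have h5 : 0 ≤ 2 * (d : ℝ) * (X ^ γ)⁻¹ := by positivity
    rw [h2, _root_.sub_sub_cancel] at hsum
    nlinarith
  have hone := measure_LIP_eq_one hα.1.le hθ (by linarith) (hP d (1 - q) ⟨by linarith, by linarith⟩)
    hsum
  have hle : pc d ≤ 1 - q := by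
    by_contra! hlt
    have hzero := (hpc d hd1).2.1 (1 - q) (by linarith) hlt
    rw [hone] at hzero
    exact one_ne_zero hzero
  calc (1 - α) / 4 = q * (c * d) ^ γ := by rw [hq, div_mul_cancel₀ _ hcd.ne']
    _ ≤ (1 - pc d) * (c * d) ^ γ := by gcongr; linarith

end Regime

/-- If `φ(d) ≤ d` and `φ(d) ∼ c·d` as `d → ∞` for some `c ∈ (0,1]`,
then for every `α ∈ (0,1)`:
`liminf_{d→∞} q_L(α,d,φ(d)) · (cd)^{1/(1−α)} ≥ (1−α)/4`. -/
theorem qL_liminf_linear_case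
    (c : ℝ) (hc : c ∈ Set.Ioc (0 : ℝ) 1)
    (φ : ℕ → ℕ) (hφ : ∀ d : ℕ, φ d ≤ d)
    (hasymp : Tendsto (fun d : ℕ => (φ d : ℝ) / (d : ℝ)) atTop (nhds c))
    (α : ℝ) (hα : α ∈ Set.Ioo (0 : ℝ) 1)
    (P : (n : ℕ) → ℝ → Measure (Config n))
    (hP : ∀ n : ℕ, ∀ p ∈ Set.Icc (0 : ℝ) 1, IsBernoulli p (P n p))
    (pc : ℕ → ℝ) (hpc : ∀ d : ℕ, 1 ≤ d → IsCriticalProb (P d) α (etaK d (φ d)) (pc d)) :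
    (1 - α) / 4 ≤
      atTop.liminf fun d : ℕ => (1 - pc d) * (c * d) ^ ((1 : ℝ) / (1 - α)) := by
  have hα1 : 0 < 1 - α := by linarith [hα.2]
  have hcast : Tendsto (fun d : ℕ => (φ d : ℝ)) atTop atTop := by
    refine (hasymp.pos_mul_atTop hc.1 tendsto_natCast_atTop_atTop).congr' ?_
    filter_upwards [eventually_ge_atTop 1] with d hd
    have : (d : ℝ) ≠ 0 := by exact_mod_cast (by omega : d ≠ 0)
    exact div_mul_cancel₀ _ this
  have hφtop : Tendsto φ atTop atTop := tendsto_natCast_atTop_iff.1 hcast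
  have hratio : Tendsto (fun d : ℕ => ((φ d : ℝ) / (c * d)) ^ (1 / (1 - α))) atTop (nhds 1) := by
    have h1 : Tendsto (fun d : ℕ => (φ d : ℝ) / (c * d)) atTop (nhds 1) := by
      have := hasymp.div_const c
      rw [div_self hc.1.ne'] at this
      refine this.congr fun d => ?_
      rw [div_div, mul_comm]
    simpa using h1.rpow_const (p := 1 / (1 - α)) (Or.inl one_ne_zero)
  obtain ⟨C, k₀, hC⟩ := exists_one_sub_critical_mul_rpow_le hα
  have hupper : ∀ᶠ d : ℕ in atTop, (1 - pc d) * (c * d) ^ ((1 : ℝ) / (1 - α)) ≤ 2 * C := by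
    filter_upwards [hφtop.eventually_ge_atTop (max k₀ 1), eventually_ge_atTop 1,
      hratio.eventually_const_le (by norm_num : (1 / 2 : ℝ) < 1)] with d hk hd hhalf
    have hk0 : (0 : ℝ) < φ d := by exact_mod_cast (by omega : 0 < φ d)
    have hcd : 0 < c * (d : ℝ) := mul_pos hc.1 (by exact_mod_cast hd)
    have hbound := hC (φ d) (by omega) d (hφ d) (P d) (hP d) (pc d) (hpc d hd)
    rw [Real.div_rpow hk0.le hcd.le, le_div_iff₀ (by positivity)] at hhalf
    have := mul_le_mul_of_nonneg_left hhalf (sub_nonneg.2 (hpc d hd).1.2.le)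
    linarith
  exact le_liminf_of_le (IsBoundedUnder.isCoboundedUnder_ge ⟨2 * C, eventually_map.2 hupper⟩)
    (eventually_quarter_le_one_sub_critical hc.1 hasymp hφtop hα hP hpc hratio)
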